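/- arXiv:2106.08149 — 10 statements merged into one kernel-verified Lean document; each statement's English description precedes it below -/
import Mathlib

section
/- Let X and Y be normed spaces, q > 0, and let H : X ⇉ Y be a q-order positively homogeneous set-valued mapping. Then the inverse mapping H⁻¹ : Y ⇉ X (defined by H⁻¹(y) = {x : y ∈ H(x)}) is (1/q)-order positively homogeneous, and moreover ‖H‖⊖_q = (‖H⁻¹‖⁺_{1/q})^{-q}. -/
/-!
The graph of `H⁻¹` is the graph of `H` with the coordinates swapped, so homogeneity of `H⁻¹`
comes from scaling by `l ^ (1 / q)` in `X`, which scales `Y` by `l`. For the norms, at each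
nonzero point `(x, y)` of the graph, `‖y‖ / ‖x‖ ^ q = (‖x‖ / ‖y‖ ^ (1 / q)) ^ (-q)` in `[0, ∞]`
(`ratio_eq`); since `t ↦ t ^ q` is an order isomorphism of `[0, ∞]` and inversion is an
order-reversing one, `t ↦ t ^ (-q)` turns the supremum into the infimum.
-/

noncomputable section

open Filter Topology Set Pointwise
open scoped ENNReal RealInnerProductSpace

variable {X : Type*} {Y : Type*} [NormedAddCommGroup X] [NormedSpace ℝ X]
  [NormedAddCommGroup Y] [NormedSpace ℝ Y]

/-- A set-valued mapping `H : X ⇉ Y` is `q`-order positively homogeneous if `0 ∈ H 0`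
and `H (l • x) = l ^ q • H x` for all `x` and all `l > 0`. -/
def PosHom (q : ℝ) (H : X → Set Y) : Prop :=
  (0 : Y) ∈ H 0 ∧ ∀ (x : X) (l : ℝ), 0 < l → H (l • x) = (l ^ q) • H x

/-- A single-valued mapping `f : X → Y` is `q`-order positively homogeneous if `f 0 = 0`
and `f (l • x) = l ^ q • f x` for all `x` and all `l > 0`. -/
def PosHomFun (q : ℝ) (f : X → Y) : Prop :=
  f 0 = 0 ∧ ∀ (x : X) (l : ℝ), 0 < l → f (l • x) = (l ^ q) • f x

/-- The inverse of a set-valued mapping. -/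
def svInv (H : X → Set Y) : Y → Set X := fun y => {x | y ∈ H x}

/-- `‖H‖⁺_q = sup {‖y‖/‖x‖^q : (x,y) ∈ gph H, (x,y) ≠ (0,0)}`, with `sup ∅ = 0` and
ratios with `x = 0`, `y ≠ 0` equal to `+∞`. -/
def plusNorm (q : ℝ) (H : X → Set Y) : ℝ≥0∞ :=
  ⨆ (p : X × Y) (_ : p.2 ∈ H p.1 ∧ p ≠ 0),
    ENNReal.ofReal ‖p.2‖ / ENNReal.ofReal (‖p.1‖ ^ q)

/-- `‖H‖⊖_q = inf {‖y‖/‖x‖^q : (x,y) ∈ gph H, (x,y) ≠ (0,0)}`, with `inf ∅ = +∞` and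
ratios with `x = 0`, `y ≠ 0` equal to `+∞`. -/
def minusNorm (q : ℝ) (H : X → Set Y) : ℝ≥0∞ :=
  ⨅ (p : X × Y) (_ : p.2 ∈ H p.1 ∧ p ≠ 0),
    ENNReal.ofReal ‖p.2‖ / ENNReal.ofReal (‖p.1‖ ^ q)

/-- Outer semicontinuity of a set-valued mapping at a point (sequential form). -/
def OuterSemicontAt (H : X → Set Y) (x₀ : X) : Prop :=
  ∀ (u : ℕ → X) (v : ℕ → Y) (y : Y), (∀ k, v k ∈ H (u k)) →
    Tendsto u atTop (𝓝 x₀) → Tendsto v atTop (𝓝 y) → y ∈ H x₀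

/-- The `q`-order graphical derivative of `F` at `(x₀, y₀) ∈ gph F`. -/
def gder (q : ℝ) (F : X → Set Y) (x₀ : X) (y₀ : Y) : X → Set Y := fun x =>
  {y | ∃ (u : ℕ → X) (v : ℕ → Y) (t : ℕ → ℝ),
    Tendsto u atTop (𝓝 x) ∧ Tendsto v atTop (𝓝 y) ∧
    (∀ k, 0 < t k) ∧ Tendsto t atTop (𝓝 0) ∧
    ∀ k, y₀ + (t k ^ q) • v k ∈ F (x₀ + t k • u k)}

/-- `f` is `q`-order Hadamard directionally differentiable at `x₀` with derivative `Df`: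
for each `x`, `(f (x₀ + t u) - f x₀) / t ^ q → Df x` as `u → x`, `t ↓ 0`. -/
def HadamardDeriv (q : ℝ) (f : X → Y) (x₀ : X) (Df : X → Y) : Prop :=
  ∀ x : X, Tendsto (fun p : X × ℝ => ((p.2 ^ q)⁻¹) • (f (x₀ + p.2 • p.1) - f x₀))
    ((𝓝 x) ×ˢ (𝓝[>] (0 : ℝ))) (𝓝 (Df x))

/-- The `q`-order Hadamard directional subderivative
`f'_q(x₀; x) = liminf_{u → x, t ↓ 0} (f (x₀ + t u) - f x₀) / t ^ q`. -/
def subder (q : ℝ) (f : X → EReal) (x₀ : X) (x : X) : EReal :=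
  liminf (fun p : X × ℝ => (f (x₀ + p.2 • p.1) - f x₀) / ((p.2 ^ q : ℝ) : EReal))
    ((𝓝 x) ×ˢ (𝓝[>] (0 : ℝ)))

/-- The nonnegative part of an extended real number, as a value in `[0, +∞]`. -/
def erealPos (x : EReal) : ℝ≥0∞ := if x = ⊤ then ⊤ else ENNReal.ofReal x.toReal

/-- `‖f'_q(x₀; ·)‖_q = inf_{‖x‖ = 1} (f'_q(x₀; x))₊`, with `inf ∅ = +∞`. -/
def subderNorm (q : ℝ) (f : X → EReal) (x₀ : X) : ℝ≥0∞ :=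
  ⨅ (x : X) (_ : ‖x‖ = 1), erealPos (subder q f x₀ x)

/-- The epigraphical mapping of `f`. -/
def epiMap (f : X → EReal) : X → Set ℝ := fun x => {μ : ℝ | f x ≤ (μ : EReal)}

/-- `F` is `q`-order strongly subregular at `(x₀, y₀)` with modulus `τ`. -/
def StrSubregWith (q τ : ℝ) (F : X → Set Y) (x₀ : X) (y₀ : Y) : Prop :=
  ∃ U ∈ 𝓝 x₀, ∃ V ∈ 𝓝 y₀, ∀ x ∈ U,
    ENNReal.ofReal (τ * ‖x - x₀‖ ^ q) ≤ EMetric.infEdist y₀ (F x ∩ V)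

/-- `srg_q F (x₀, y₀)`: the supremum of all moduli of `q`-order strong subregularity. -/
def srgMod (q : ℝ) (F : X → Set Y) (x₀ : X) (y₀ : Y) : ℝ≥0∞ :=
  ⨆ (τ : ℝ) (_ : 0 < τ ∧ StrSubregWith q τ F x₀ y₀), ENNReal.ofReal τ

/-- `S` possesses the `q`-order isolated calmness property at `(y₀, x₀)` with modulus `τ`. -/
def CalmWith (q τ : ℝ) (S : Y → Set X) (y₀ : Y) (x₀ : X) : Prop :=
  ∃ U ∈ 𝓝 x₀, ∃ V ∈ 𝓝 y₀, ∀ y ∈ V, ∀ x ∈ S y, x ∈ U → τ * ‖x - x₀‖ ^ q ≤ ‖y - y₀‖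

/-- `clm_q S (y₀, x₀)`: the supremum of all moduli of `q`-order isolated calmness. -/
def clmMod (q : ℝ) (S : Y → Set X) (y₀ : Y) (x₀ : X) : ℝ≥0∞ :=
  ⨆ (τ : ℝ) (_ : 0 < τ ∧ CalmWith q τ S y₀ x₀), ENNReal.ofReal τ

/-- `x₀` is a `q`-order sharp minimizer of `f` with modulus `τ`. -/
def SharpMinWith (q τ : ℝ) (f : X → EReal) (x₀ : X) : Prop :=
  ∃ U ∈ 𝓝 x₀, ∀ x ∈ U, ((τ * ‖x - x₀‖ ^ q : ℝ) : EReal) ≤ f x - f x₀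

/-- `shrp_q f (x₀)`: the supremum of all moduli of `q`-order sharp minimality. -/
def shrpMod (q : ℝ) (f : X → EReal) (x₀ : X) : ℝ≥0∞ :=
  ⨆ (τ : ℝ) (_ : 0 < τ ∧ SharpMinWith q τ f x₀), ENNReal.ofReal τ

/-- `H : X ⇉ X*` is `q`-order positively definite with modulus `l`:
`⟨x*, x⟩ ≥ l ‖x‖^(q+1)` for all `(x, x*) ∈ gph H`. -/
def PosDefWith (q l : ℝ) (H : X → Set (X →L[ℝ] ℝ)) : Prop :=
  ∀ (x : X), ∀ xs ∈ H x, l * ‖x‖ ^ (q + 1) ≤ xs x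

/-- `‖H‖*_q = inf {⟨x*, x⟩₊ / ‖x‖^(q+1) : (x, x*) ∈ gph H, x ≠ 0}`, with `inf ∅ = +∞`. -/
def starNorm (q : ℝ) (H : X → Set (X →L[ℝ] ℝ)) : ℝ≥0∞ :=
  ⨅ (p : X × (X →L[ℝ] ℝ)) (_ : p.2 ∈ H p.1 ∧ p.1 ≠ 0),
    ENNReal.ofReal (p.2 p.1) / ENNReal.ofReal (‖p.1‖ ^ (q + 1))

/-- The convex subdifferential of `f : X → ℝ ∪ {+∞}` at `x`. -/
def subdiff (f : X → EReal) (x : X) : Set (X →L[ℝ] ℝ) :=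
  {xs | ∀ u : X, ((xs (u - x) : ℝ) : EReal) ≤ f u - f x}

/-- Convexity for extended-real-valued functions. -/
def EConvexOn (f : X → EReal) : Prop :=
  ∀ x y : X, ∀ a b : ℝ, 0 ≤ a → 0 ≤ b → a + b = 1 →
    f (a • x + b • y) ≤ (a : EReal) * f x + (b : EReal) * f y

/-- For `(x, y) ≠ (0, 0)` the two ratios correspond under `t ↦ t ^ (-q)`, including the
degenerate cases where one of the norms vanishes (`0 ↔ ∞`). -/
lemma ratio_eq (q : ℝ) (hq : 0 < q) (x : X) (y : Y) (h : x ≠ 0 ∨ y ≠ 0) :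
    ENNReal.ofReal ‖y‖ / ENNReal.ofReal (‖x‖ ^ q) =
      ((ENNReal.ofReal ‖x‖ / ENNReal.ofReal (‖y‖ ^ (1 / q))) ^ q)⁻¹ := by
  have hq1 : 0 ≤ 1 / q := by positivity
  rw [ENNReal.div_rpow_of_nonneg _ _ hq.le, ENNReal.ofReal_rpow_of_nonneg (norm_nonneg x) hq.le,
    ENNReal.ofReal_rpow_of_nonneg (by positivity) hq.le, ← Real.rpow_mul (norm_nonneg y),
    one_div_mul_cancel hq.ne', Real.rpow_one, ENNReal.inv_div (Or.inl ENNReal.ofReal_ne_top)]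
  rcases h with h | h
  · right
    have : 0 < ‖x‖ := norm_pos_iff.2 h
    simp only [ne_eq, ENNReal.ofReal_eq_zero, not_le]
    positivity
  · left
    simpa using h

/-- if `H` is `q`-order positively homogeneous, then `H⁻¹` is `1/q`-order
positively homogeneous and `‖H‖⊖_q = (‖H⁻¹‖⁺_{1/q})^{-q}`. -/
theorem stmt0 (q : ℝ) (hq : 0 < q) (H : X → Set Y) (hH : PosHom q H) :
    PosHom (1 / q) (svInv H) ∧
    minusNorm q H = (plusNorm (1 / q) (svInv H)) ^ (-q) := by
  refine ⟨⟨hH.1, fun y l hl => ?_⟩, ?_⟩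
  · have hs : 0 < l ^ (1 / q) := Real.rpow_pos_of_pos hl _
    ext x
    rw [Set.mem_smul_set_iff_inv_smul_mem₀ hs.ne']
    change l • y ∈ H x ↔ y ∈ H ((l ^ (1 / q))⁻¹ • x)
    -- The scaling factor `(l ^ (1 / q))⁻¹` in `X` becomes `l⁻¹` in `Y`.
    have hl' : ((l ^ (1 / q))⁻¹) ^ q = l⁻¹ := by
      rw [Real.inv_rpow hs.le, ← Real.rpow_mul hl.le, one_div_mul_cancel hq.ne', Real.rpow_one]
    rw [hH.2 x _ (inv_pos.2 hs), hl', Set.mem_smul_set_iff_inv_smul_mem₀ (inv_pos.2 hl).ne',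
      inv_inv]
  · have hsup : ∀ {ι : Sort _} (f : ι → ℝ≥0∞), (⨆ i, f i) ^ q = ⨆ i, f i ^ q :=
      fun f => (ENNReal.orderIsoRpow q hq).map_iSup f
    have hsup' : ∀ {ι : Prop} (f : ι → ℝ≥0∞), (⨆ i, f i) ^ q = ⨆ i, f i ^ q :=
      fun f => (ENNReal.orderIsoRpow q hq).map_iSup f
    rw [ENNReal.rpow_neg]
    unfold minusNorm plusNorm
    rw [hsup, ENNReal.inv_iSup, ← (Equiv.prodComm X Y).iInf_comp]
    refine iInf_congr fun p => ?_
    rw [hsup', ENNReal.inv_iSup]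
    have hp : p.2 ∈ H p.1 ∧ p ≠ 0 ↔
        (Equiv.prodComm X Y p).2 ∈ svInv H (Equiv.prodComm X Y p).1 ∧
          Equiv.prodComm X Y p ≠ 0 := by
      rcases p with ⟨x, y⟩
      simp [svInv, Prod.ext_iff, and_comm]
    refine iInf_congr_Prop hp fun h => ratio_eq q hq p.1 p.2 ?_
    by_contra! hc
    exact (hp.2 h).2 (Prod.ext hc.1 hc.2)

end
end

section
/- Let X and Y be normed spaces, q > 0, and let H : X ⇉ Y be a q-order positively homogeneous set-valued mapping. If ‖H‖⁺_q < +∞, then H(0) = {0}. If, in addition, Y is finite-dimensional and H is outer semicontinuous at 0, then the two conditions are equivalent: ‖H‖⁺_q < +∞ if and only if H(0) = {0}. -/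
/-!
A nonzero element of `H 0` contributes the ratio `‖y‖ / 0 = ⊤`, so a finite `‖H‖⁺_q` forces
`H 0 = {0}`. Conversely, if `H 0 = {0}` but `‖H‖⁺_q = ⊤`, homogeneity lets one rescale graph points
with large ratio so that `‖y‖ = 1` and `x → 0` (`exists_unit_graph_point`). The unit sphere of the
finite-dimensional space `Y` is compact, so a subsequence of the `y`s converges to a unit vector,
which lies in `H 0` by outer semicontinuity: a contradiction.
-/

noncomputable section

open Filter Topology Set Pointwise
open scoped ENNReal RealInnerProductSpace

variable {X : Type*} {Y : Type*} [NormedAddCommGroup X] [NormedSpace ℝ X]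
  [NormedAddCommGroup Y] [NormedSpace ℝ Y]

/-- If the ratios `‖y‖ / ‖x‖ ^ q` over the graph are unbounded and `H 0 = {0}`, then rescaling by
`‖y‖ ^ (-1/q)` yields a graph point with `y` on the unit sphere and `‖x‖ ^ q` as small as desired. -/
lemma exists_unit_graph_point (q : ℝ) (hq : 0 < q) (H : X → Set Y) (hH : PosHom q H)
    (h0 : H 0 = {0}) (htop : plusNorm q H = ⊤) (n : ℕ) :
    ∃ p : X × Y, p.2 ∈ H p.1 ∧ ‖p.2‖ = 1 ∧ ‖p.1‖ ^ q ≤ 1 / ((n : ℝ) + 1) := by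
  have hlt : ENNReal.ofReal ((n : ℝ) + 1) < plusNorm q H := by
    rw [htop]; exact ENNReal.ofReal_lt_top
  simp only [plusNorm, lt_iSup_iff] at hlt
  obtain ⟨⟨x, y⟩, ⟨hxy, hne⟩, hlt⟩ := hlt
  simp only at hxy hlt
  have hx : x ≠ 0 := by
    rintro rfl
    rw [h0] at hxy
    exact hne (Prod.ext rfl hxy)
  have hxq : 0 < ‖x‖ ^ q := Real.rpow_pos_of_pos (norm_pos_iff.2 hx) q
  have hn : (0 : ℝ) < (n : ℝ) + 1 := by positivity
  rw [← ENNReal.ofReal_div_of_pos hxq, ENNReal.ofReal_lt_ofReal_iff', lt_div_iff₀ hxq] at hlt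
  have hy : 0 < ‖y‖ := (mul_pos hn hxq).trans hlt.1
  have ht : 0 < ‖y‖ ^ (-(1 / q)) := Real.rpow_pos_of_pos hy _
  have htq : (‖y‖ ^ (-(1 / q))) ^ q = ‖y‖⁻¹ := by
    rw [← Real.rpow_mul hy.le, ← Real.rpow_neg_one]
    congr 1
    field_simp
  refine ⟨(‖y‖ ^ (-(1 / q)) • x, ‖y‖⁻¹ • y), ?_, ?_, ?_⟩
  · simp only
    rw [hH.2 x _ ht, htq]
    exact Set.smul_mem_smul_set hxy
  · simp only [norm_smul, norm_inv, norm_norm]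
    exact inv_mul_cancel₀ hy.ne'
  · simp only [norm_smul, Real.norm_of_nonneg ht.le]
    rw [Real.mul_rpow ht.le (norm_nonneg x), htq, inv_mul_eq_div, div_le_div_iff₀ hy hn]
    linarith [hlt.1]

/-- if `H` is `q`-order positively homogeneous and `‖H‖⁺_q < +∞`, then
`H 0 = {0}`; if moreover `Y` is finite-dimensional and `H` is outer semicontinuous
at `0`, the two conditions are equivalent. -/
theorem stmt1 (q : ℝ) (hq : 0 < q) (H : X → Set Y) (hH : PosHom q H) :
    (plusNorm q H < ⊤ → H 0 = {0}) ∧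
    (FiniteDimensional ℝ Y → OuterSemicontAt H 0 →
      (plusNorm q H < ⊤ ↔ H 0 = {0})) := by
  have key : plusNorm q H < ⊤ → H 0 = {0} := by
    intro h
    refine Set.eq_singleton_iff_unique_mem.2 ⟨hH.1, fun y hy => ?_⟩
    by_contra hne
    -- A nonzero `y ∈ H 0` contributes the ratio `‖y‖ / 0 = ⊤` to the supremum.
    refine h.ne (top_le_iff.1 ?_)
    refine le_trans ?_ (le_iSup₂_of_le (f := fun (p : X × Y) (_ : p.2 ∈ H p.1 ∧ p ≠ 0) =>
      ENNReal.ofReal ‖p.2‖ / ENNReal.ofReal (‖p.1‖ ^ q)) ((0 : X), y)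
      ⟨hy, fun h' => hne (congrArg Prod.snd h')⟩ le_rfl)
    simp only [norm_zero, Real.zero_rpow hq.ne', ENNReal.ofReal_zero]
    rw [ENNReal.div_zero]
    simpa using hne
  refine ⟨key, fun hfin hosc => ⟨key, fun h0 => ?_⟩⟩
  by_contra hnot
  have htop : plusNorm q H = ⊤ := not_lt_top_iff.1 hnot
  choose p hpH hp1 hpq using exists_unit_graph_point q hq H hH h0 htop
  have hxq : Tendsto (fun n => ‖(p n).1‖ ^ q) atTop (𝓝 0) :=
    squeeze_zero (fun n => Real.rpow_nonneg (norm_nonneg _) q) hpq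
      tendsto_one_div_add_atTop_nhds_zero_nat
  have hx : Tendsto (fun n => (p n).1) atTop (𝓝 0) := by
    rw [tendsto_zero_iff_norm_tendsto_zero]
    have h := hxq.rpow_const (p := q⁻¹) (Or.inr (inv_pos.2 hq).le)
    rw [Real.zero_rpow (inv_pos.2 hq).ne'] at h
    refine h.congr fun n => ?_
    rw [Real.rpow_rpow_inv (norm_nonneg _) hq.ne']
  haveI : ProperSpace Y := FiniteDimensional.proper ℝ Y
  obtain ⟨y, hy, φ, hφ, hlim⟩ := (isCompact_sphere (0 : Y) 1).tendsto_subseq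
    (x := fun n => (p n).2) (fun n => by simpa using hp1 n)
  have hyH : y ∈ H 0 := hosc (fun n => (p (φ n)).1) (fun n => (p (φ n)).2) y
    (fun n => hpH (φ n)) (hx.comp hφ.tendsto_atTop) hlim
  rw [h0, Set.mem_singleton_iff] at hyH
  simp [hyH] at hy

end
end

section
/- Let X and Y be normed spaces, q > 0, and let H : X ⇉ Y be a q-order positively homogeneous set-valued mapping. If ‖H‖⊖_q > 0, then H⁻¹(0) = {0}. If, in addition, X is finite-dimensional and H⁻¹ is outer semicontinuous at 0, then the two conditions are equivalent: ‖H‖⊖_q > 0 if and only if H⁻¹(0) = {0}. -/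
/-!
If `0 ∈ H x` with `x ≠ 0`, the pair `(x, 0)` contributes the ratio `0` to the infimum, so
`‖H‖⊖_q > 0` forces `H⁻¹ 0 = {0}`. Conversely, if `‖H‖⊖_q = 0`, homogeneity rescales graph
points with small ratio to points `(u, v)` of the graph with `‖u‖ = 1` and `‖v‖` small
(`exists_unit_of_minusNorm_eq_zero`). Compactness of the unit sphere of a finite-dimensional
space yields a limit `u` of norm one, and outer semicontinuity puts `u` in `H⁻¹ 0`.
-/

noncomputable section

open Filter Topology Set Pointwise
open scoped ENNReal RealInnerProductSpace

variable {X : Type*} {Y : Type*} [NormedAddCommGroup X] [NormedSpace ℝ X]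
  [NormedAddCommGroup Y] [NormedSpace ℝ Y]

theorem svInv_zero_of_minusNorm_pos {q : ℝ} {H : X → Set Y} (hH : PosHom q H)
    (h : 0 < minusNorm q H) : svInv H 0 = {0} := by
  ext x
  refine ⟨fun hx => ?_, fun hx => ?_⟩
  · by_contra hne
    have hx0 : x ≠ 0 := hne
    have hle : minusNorm q H ≤
        ENNReal.ofReal ‖(0 : Y)‖ / ENNReal.ofReal (‖x‖ ^ q) :=
      iInf₂_le (f := fun (p : X × Y) (_ : p.2 ∈ H p.1 ∧ p ≠ 0) =>
        ENNReal.ofReal ‖p.2‖ / ENNReal.ofReal (‖p.1‖ ^ q)) (x, (0 : Y))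
        ⟨hx, fun h0 => hx0 (congrArg Prod.fst h0)⟩
    rw [norm_zero, ENNReal.ofReal_zero, ENNReal.zero_div] at hle
    exact absurd h (not_lt.mpr hle)
  · have hx0 : x = 0 := hx
    subst hx0
    exact hH.1

/-- If `‖H‖⊖_q = 0`, the graph of `H` contains points `(u, v)` with `u` on the unit sphere and
`v` arbitrarily small. -/
theorem exists_unit_of_minusNorm_eq_zero {q : ℝ} (hq : 0 < q) {H : X → Set Y} (hH : PosHom q H)
    (h : minusNorm q H = 0) {ε : ℝ} (hε : 0 < ε) :
    ∃ u v, v ∈ H u ∧ ‖u‖ = 1 ∧ ‖v‖ < ε := by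
  have hlt : minusNorm q H < ENNReal.ofReal ε := by
    rw [h]; exact ENNReal.ofReal_pos.mpr hε
  unfold minusNorm at hlt
  simp only [iInf_lt_iff] at hlt
  obtain ⟨⟨x, y⟩, ⟨hxy, hne⟩, hr⟩ := hlt
  dsimp only at hxy hr
  have hx : x ≠ 0 := by
    -- at `x = 0` the ratio is `‖y‖ / 0 = ⊤`, as then `y ≠ 0`
    rintro rfl
    have hy : y ≠ 0 := by
      rintro rfl
      exact hne rfl
    rw [norm_zero, Real.zero_rpow hq.ne', ENNReal.ofReal_zero, ENNReal.div_zero] at hr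
    · exact not_top_lt hr
    · exact (ENNReal.ofReal_pos.mpr (norm_pos_iff.mpr hy)).ne'
  have hn : 0 < ‖x‖ := norm_pos_iff.mpr hx
  have hnq : 0 < ‖x‖ ^ q := Real.rpow_pos_of_pos hn q
  rw [← ENNReal.ofReal_div_of_pos hnq, ENNReal.ofReal_lt_ofReal_iff hε] at hr
  refine ⟨‖x‖⁻¹ • x, (‖x‖⁻¹ ^ q) • y, ?_, ?_, ?_⟩
  · rw [hH.2 x _ (inv_pos.mpr hn)]
    exact Set.smul_mem_smul_set hxy
  · rw [norm_smul, norm_inv, norm_norm, inv_mul_cancel₀ hn.ne']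
  · rw [norm_smul, Real.inv_rpow hn.le, norm_inv, Real.norm_of_nonneg hnq.le,
      inv_mul_eq_div]
    exact hr

/-- if `H` is `q`-order positively homogeneous and `‖H‖⊖_q > 0`, then
`H⁻¹ 0 = {0}`; if moreover `X` is finite-dimensional and `H⁻¹` is outer semicontinuous
at `0`, the two conditions are equivalent. -/
theorem stmt2 (q : ℝ) (hq : 0 < q) (H : X → Set Y) (hH : PosHom q H) :
    (0 < minusNorm q H → svInv H 0 = {0}) ∧
    (FiniteDimensional ℝ X → OuterSemicontAt (svInv H) 0 →
      (0 < minusNorm q H ↔ svInv H 0 = {0})) := by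
  refine ⟨svInv_zero_of_minusNorm_pos hH, fun hfin hosc =>
    ⟨svInv_zero_of_minusNorm_pos hH, fun h0 => ?_⟩⟩
  by_contra hpos
  have hzero : minusNorm q H = 0 := nonpos_iff_eq_zero.mp (not_lt.mp hpos)
  have hex : ∀ k : ℕ, ∃ u v, v ∈ H u ∧ ‖u‖ = 1 ∧ ‖v‖ < 1 / ((k : ℝ) + 1) := fun k =>
    exists_unit_of_minusNorm_eq_zero hq hH hzero Nat.one_div_pos_of_nat
  choose u v hmem hu hv using hex
  have hv0 : Tendsto v atTop (𝓝 0) :=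
    squeeze_zero_norm (fun k => (hv k).le) tendsto_one_div_add_atTop_nhds_zero_nat
  have : ProperSpace X := FiniteDimensional.proper ℝ X
  obtain ⟨a, ha, φ, hφ, hlim⟩ := (isCompact_sphere (0 : X) 1).tendsto_subseq
    (fun k => mem_sphere_zero_iff_norm.mpr (hu k))
  have ha0 : a ∈ svInv H 0 :=
    hosc (v ∘ φ) (u ∘ φ) a (fun k => hmem (φ k)) (hv0.comp hφ.tendsto_atTop) hlim
  rw [h0] at ha0
  have haz : a = 0 := ha0
  rw [mem_sphere_zero_iff_norm, haz, norm_zero] at ha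
  exact zero_ne_one ha

end
end

section
/- Let X be a normed space with topological dual X*, q > 0, and let H : X ⇉ X* be a q-order positively homogeneous set-valued mapping that is p-order positively definite for some p > 0. Then either dom H = {0} or p = q. -/
/-!
If `x ≠ 0` lies in the domain of `H` and `xs ∈ H x`, then homogeneity gives `t ^ q • xs ∈ H (t • x)`
for every `t > 0`. Positive definiteness at this point, divided by `t ^ (q + 1)`, reads
`l * ‖x‖ ^ (p + 1) * t ^ (p - q) ≤ xs x`. When `p ≠ q`, the factor `t ^ (p - q)` takes arbitrarily
large values on `t > 0`, which contradicts this bound. Hence `p ≠ q` forces the domain to be `{0}`.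
-/

noncomputable section

open Filter Topology Set Pointwise
open scoped ENNReal RealInnerProductSpace

variable {X : Type*} {Y : Type*} [NormedAddCommGroup X] [NormedSpace ℝ X]
  [NormedAddCommGroup Y] [NormedSpace ℝ Y]

/-- The scaling inequality along the ray through a point `x` of the domain. -/
lemma PosDefWith.mul_rpow_sub_le {q p l : ℝ} {H : X → Set (X →L[ℝ] ℝ)}
    (hH : PosHom q H) (hl : PosDefWith p l H) {x : X} {xs : X →L[ℝ] ℝ} (hxs : xs ∈ H x)
    {t : ℝ} (ht : 0 < t) : l * ‖x‖ ^ (p + 1) * t ^ (p - q) ≤ xs x := by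
  have hmem : t ^ q • xs ∈ H (t • x) := by
    rw [hH.2 x t ht]
    exact smul_mem_smul_set hxs
  have h := hl _ _ hmem
  rw [norm_smul, Real.norm_of_nonneg ht.le, Real.mul_rpow ht.le (norm_nonneg x)] at h
  simp only [ContinuousLinearMap.smul_apply, map_smul, smul_eq_mul] at h
  have hsplit : t ^ (p + 1) = t ^ (p - q) * (t ^ q * t) := by
    rw [← Real.rpow_add_one ht.ne', ← Real.rpow_add ht]
    congr 1
    ring
  have hpos : 0 < t ^ q * t := by positivity
  rw [hsplit] at h
  refine le_of_mul_le_mul_right ?_ hpos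
  linarith

/-- if `H : X ⇉ X*` is `q`-order positively homogeneous and `p`-order
positively definite for some `p > 0`, then either `dom H = {0}` or `p = q`. -/
theorem stmt3 (q p : ℝ) (hq : 0 < q) (hp : 0 < p) (H : X → Set (X →L[ℝ] ℝ))
    (hH : PosHom q H) (hpd : ∃ l > 0, PosDefWith p l H) :
    {x : X | (H x).Nonempty} = {0} ∨ p = q := by
  obtain ⟨l, hl0, hl⟩ := hpd
  by_cases hpq : p = q
  · exact Or.inr hpq
  left
  ext x
  simp only [mem_setOf_eq, mem_singleton_iff]
  constructor
  · rintro ⟨xs, hxs⟩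
    by_contra hx
    have ha : 0 < l * ‖x‖ ^ (p + 1) := by
      have := norm_pos_iff.mpr hx
      positivity
    set a := l * ‖x‖ ^ (p + 1) with ha_def
    have hc : a ≤ xs x := hl x xs hxs
    have hs : 0 < xs x / a + 1 := by
      have := div_pos (ha.trans_le hc) ha
      linarith
    -- `t = (xs x / a + 1) ^ (p - q)⁻¹` makes the left side of the scaling inequality `xs x + a`.
    have h := PosDefWith.mul_rpow_sub_le hH hl hxs
      (Real.rpow_pos_of_pos hs (p - q)⁻¹)
    rw [Real.rpow_inv_rpow hs.le (sub_ne_zero.mpr hpq), ← ha_def, mul_add, mul_one,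
      mul_div_cancel₀ _ ha.ne'] at h
    linarith
  · rintro rfl
    exact ⟨0, hH.1⟩

end
end

section
/- Let X and Y be normed spaces, q > 0, F : X ⇉ Y a set-valued mapping, f : X → Y a function, and (x̄, ȳ) ∈ gph F. If f is q-order Hadamard directionally differentiable at x̄, then D_q(F+f)(x̄, ȳ + f(x̄))(x) = D_q F(x̄, ȳ)(x) + D_q f(x̄)(x) for all x ∈ X, where F+f is the mapping x ↦ {y + f(x) : y ∈ F(x)}. -/
/-!
The sum rule follows by shifting the witnessing sequences. Along `u k → x`, `t k ↓ 0` the quotients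
`w k = (f (x₀ + t k • u k) - f x₀) / t k ^ q` converge to `Df x`
(`HadamardDeriv.tendsto_seq`), and `t k ^ q • w k` is exactly the increment of `f`. Hence
`(u, v, t)` witnesses a derivative of `F + f` if and only if `(u, v - w, t)` witnesses one of `F`.
-/

noncomputable section

open Filter Topology Set Pointwise
open scoped ENNReal RealInnerProductSpace

variable {X : Type*} {Y : Type*} [NormedAddCommGroup X] [NormedSpace ℝ X]
  [NormedAddCommGroup Y] [NormedSpace ℝ Y]

/-- The difference quotients of `f` along any sequence admissible in the definition of `gder`
converge to the Hadamard derivative. -/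
theorem HadamardDeriv.tendsto_seq {q : ℝ} {f : X → Y} {x₀ : X} {Df : X → Y}
    (hf : HadamardDeriv q f x₀ Df) {x : X} {u : ℕ → X} {t : ℕ → ℝ}
    (hu : Tendsto u atTop (𝓝 x)) (ht : ∀ k, 0 < t k) (ht0 : Tendsto t atTop (𝓝 0)) :
    Tendsto (fun k => ((t k ^ q)⁻¹) • (f (x₀ + t k • u k) - f x₀)) atTop (𝓝 (Df x)) :=
  (hf x).comp (hu.prodMk
    (tendsto_nhdsWithin_iff.2 ⟨ht0, Eventually.of_forall fun k => ht k⟩))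

/-- sum rule for `q`-order graphical derivatives: if `f` is `q`-order
Hadamard directionally differentiable at `x₀`, then
`D_q(F+f)(x₀, y₀ + f x₀)(x) = D_q F(x₀, y₀)(x) + D_q f(x₀)(x)` for all `x`. -/
theorem stmt5 (q : ℝ) (hq : 0 < q) (F : X → Set Y) (f : X → Y) (x₀ : X) (y₀ : Y)
    (hxy : y₀ ∈ F x₀) (Df : X → Y) (hf : HadamardDeriv q f x₀ Df) :
    ∀ x : X, gder q (fun u => (fun y => y + f u) '' F u) x₀ (y₀ + f x₀) x =
      gder q F x₀ y₀ x + {Df x} := by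
  intro x
  -- `t ^ q` times the difference quotient recovers the increment of `f`.
  have key : ∀ (s : ℝ) (z : X), 0 < s →
      (s ^ q) • (((s ^ q)⁻¹) • (f (x₀ + s • z) - f x₀)) = f (x₀ + s • z) - f x₀ :=
    fun s z hs => smul_inv_smul₀ (Real.rpow_pos_of_pos hs q).ne' _
  ext y
  rw [Set.add_singleton, Set.mem_image]
  constructor
  · rintro ⟨u, v, t, hu, hv, ht, ht0, hmem⟩
    refine ⟨y - Df x, ⟨u, fun k => v k - ((t k ^ q)⁻¹) • (f (x₀ + t k • u k) - f x₀), t,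
      hu, hv.sub (hf.tendsto_seq hu ht ht0), ht, ht0, fun k => ?_⟩, sub_add_cancel _ _⟩
    obtain ⟨z, hz, hzeq⟩ := hmem k
    have hz' : y₀ + (t k ^ q) • (v k - ((t k ^ q)⁻¹) • (f (x₀ + t k • u k) - f x₀)) = z := by
      rw [smul_sub, key _ _ (ht k), eq_sub_of_add_eq hzeq]
      abel
    rwa [hz']
  · rintro ⟨y', ⟨u, v, t, hu, hv, ht, ht0, hmem⟩, rfl⟩
    refine ⟨u, fun k => v k + ((t k ^ q)⁻¹) • (f (x₀ + t k • u k) - f x₀), t,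
      hu, hv.add (hf.tendsto_seq hu ht ht0), ht, ht0, fun k => ⟨_, hmem k, ?_⟩⟩
    simp only [smul_add, key _ _ (ht k)]
    abel

end
end

section
/- Let X be a normed space, q > 0, f : X → ℝ ∪ {+∞}, and x̄ ∈ dom f. Then: (a) either f'_q(x̄; 0) = 0 or f'_q(x̄; 0) = −∞; (b) for every x ∈ X, D_q(epi f)(x̄, f(x̄))(x) = {μ ∈ ℝ : f'_q(x̄; x) ≤ μ}; (c) ‖D_q(epi f)(x̄, f(x̄))‖⁺_q = +∞ and ‖D_q(epi f)(x̄, f(x̄))‖⊖_q = ‖f'_q(x̄;·)‖_q. -/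
/-! The condition `r + t ^ q * v ≥ f (x₀ + t u)` defining the epigraph along the scaled sequences is
equivalent to `v` dominating the difference quotient at `(u, t)` (`quot_le_iff`). Hence `μ` lies in
the graphical derivative of the epigraphical mapping exactly when it dominates a limit of such
quotients, that is, when `μ ≥ f'_q(x₀; x)` (`gder_epi_iff`). The graph of a graphical derivative is
invariant under `(x, y) ↦ (l x, l ^ q y)` for `l > 0` (`gder_scale`); at `x = 0` this leaves only
`0` and `-∞` as possible values of the subderivative, and it lets the infimum defining `‖·‖⊖_q` be
taken over the unit sphere, where the least `|μ|` with `μ ≥ f'_q(x₀; x)` is `(f'_q(x₀; x))₊`. -/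

noncomputable section

open Filter Topology Set Pointwise
open scoped ENNReal RealInnerProductSpace

variable {X : Type*} {Y : Type*} [NormedAddCommGroup X] [NormedSpace ℝ X]
  [NormedAddCommGroup Y] [NormedSpace ℝ Y]

lemma quot_le_iff (a : EReal) (r s v : ℝ) (hs : 0 < s) :
    (a - (r : EReal)) / (s : EReal) ≤ (v : EReal) ↔ a ≤ ((r + s * v : ℝ) : EReal) := by
  rw [EReal.div_le_iff_le_mul (by exact_mod_cast hs) (EReal.coe_ne_top _),
    EReal.sub_le_iff_le_add (by simp) (by simp), ← EReal.coe_mul, ← EReal.coe_add, add_comm r]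

lemma gder_scale {q : ℝ} {F : X → Set Y} {x₀ : X} {y₀ : Y} {x : X} {y : Y} {l : ℝ}
    (hl : 0 < l) (h : y ∈ gder q F x₀ y₀ x) : (l ^ q) • y ∈ gder q F x₀ y₀ (l • x) := by
  obtain ⟨u, v, t, hu, hv, ht, ht0, hF⟩ := h
  refine ⟨fun k => l • u k, fun k => (l ^ q) • v k, fun k => t k / l, hu.const_smul l,
    hv.const_smul _, fun k => div_pos (ht k) hl, by simpa using ht0.div_const l, fun k => ?_⟩
  have h1 : (t k / l) ^ q * l ^ q = t k ^ q := by
    rw [← Real.mul_rpow (div_pos (ht k) hl).le hl.le, div_mul_cancel₀ _ hl.ne']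
  simpa only [smul_smul, h1, div_mul_cancel₀ _ hl.ne'] using hF k

lemma gder_epi_iff {q : ℝ} {f : X → EReal} {x₀ : X} {r : ℝ} (hx₀ : f x₀ = (r : EReal))
    (x : X) (μ : ℝ) :
    μ ∈ gder q (epiMap f) x₀ r x ↔ subder q f x₀ x ≤ (μ : EReal) := by
  constructor
  · rintro ⟨u, v, t, hu, hv, ht, ht0, hF⟩
    refine le_of_forall_lt fun c hc => ?_
    obtain ⟨d, hcd, hd⟩ := exists_between hc
    refine hcd.trans_le ?_
    have hev := eventually_lt_of_lt_liminf hd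
    have htend : Tendsto (fun k => (u k, t k)) atTop ((𝓝 x) ×ˢ (𝓝[>] (0 : ℝ))) :=
      hu.prodMk (tendsto_nhdsWithin_iff.2 ⟨ht0, Eventually.of_forall ht⟩)
    refine ge_of_tendsto ((continuous_coe_real_ereal.tendsto μ).comp hv) ?_
    filter_upwards [htend.eventually hev] with k hk
    refine hk.le.trans ?_
    rw [hx₀]
    exact (quot_le_iff _ _ _ _ (Real.rpow_pos_of_pos (ht k) q)).2 (hF k)
  · intro h
    have key : ∀ n : ℕ, ∃ p : X × ℝ, dist p.1 x < 1 / ((n : ℝ) + 1) ∧ 0 < p.2 ∧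
        p.2 < 1 / ((n : ℝ) + 1) ∧
        r + (p.2 ^ q) • (μ + 1 / ((n : ℝ) + 1)) ∈ epiMap f (x₀ + p.2 • p.1) := by
      intro n
      have hn : (0 : ℝ) < 1 / ((n : ℝ) + 1) := Nat.one_div_pos_of_nat
      have hlt : subder q f x₀ x < ((μ + 1 / ((n : ℝ) + 1) : ℝ) : EReal) :=
        h.trans_lt (by exact_mod_cast lt_add_of_pos_right μ hn)
      have hfr := frequently_lt_of_liminf_lt (by isBoundedDefault) hlt
      have hev : ∀ᶠ p : X × ℝ in (𝓝 x) ×ˢ (𝓝[>] (0 : ℝ)),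
          dist p.1 x < 1 / ((n : ℝ) + 1) ∧ p.2 ∈ Ioo (0 : ℝ) (1 / ((n : ℝ) + 1)) :=
        (Metric.eventually_nhds_iff.2 ⟨_, hn, fun _ hy => hy⟩ :
          ∀ᶠ y in 𝓝 x, dist y x < 1 / ((n : ℝ) + 1)).prod_mk (Ioo_mem_nhdsGT hn)
      obtain ⟨p, hp, h1, h2, h3⟩ := (hfr.and_eventually hev).exists
      rw [hx₀] at hp
      exact ⟨p, h1, h2, h3, (quot_le_iff _ _ _ _ (Real.rpow_pos_of_pos h2 q)).1 hp.le⟩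
    choose p h1 h2 h3 h4 using key
    have h0 := tendsto_one_div_add_atTop_nhds_zero_nat (𝕜 := ℝ)
    refine ⟨fun n => (p n).1, fun n => μ + 1 / ((n : ℝ) + 1), fun n => (p n).2, ?_, ?_, h2, ?_, h4⟩
    · exact tendsto_iff_dist_tendsto_zero.2
        (squeeze_zero (fun _ => dist_nonneg) (fun n => (h1 n).le) h0)
    · simpa using h0.const_add μ
    · exact squeeze_zero (fun n => (h2 n).le) (fun n => (h3 n).le) h0

/-- The constant direction `u = 0` has all difference quotients equal to `0`. -/
lemma subder_zero_le {q : ℝ} {f : X → EReal} {x₀ : X} {r : ℝ} (hx₀ : f x₀ = (r : EReal)) :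
    subder q f x₀ 0 ≤ 0 := by
  rw [← EReal.coe_zero, ← gder_epi_iff hx₀]
  refine ⟨fun _ => 0, fun _ => 0, fun n => 1 / ((n : ℝ) + 1), tendsto_const_nhds,
    tendsto_const_nhds, fun _ => Nat.one_div_pos_of_nat,
    tendsto_one_div_add_atTop_nhds_zero_nat, fun _ => ?_⟩
  simp [epiMap, hx₀]

lemma erealPos_le_of_le {a : EReal} {μ : ℝ} (h : a ≤ (μ : EReal)) :
    erealPos a ≤ ENNReal.ofReal ‖μ‖ := by
  induction a with
  | bot => simp [erealPos]
  | top => simp at h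
  | coe a =>
    have h' : a ≤ μ := by exact_mod_cast h
    simpa [erealPos] using ENNReal.ofReal_le_ofReal (h'.trans (le_abs_self μ))

lemma exists_real_erealPos {a : EReal} (h : a ≠ ⊤) :
    ∃ μ : ℝ, a ≤ (μ : EReal) ∧ ENNReal.ofReal ‖μ‖ = erealPos a := by
  refine ⟨max a.toReal 0, ?_, ?_⟩
  · exact (EReal.le_coe_toReal h).trans (by exact_mod_cast le_max_left _ _)
  · rw [Real.norm_of_nonneg (le_max_right _ _), erealPos, if_neg h, ENNReal.ofReal_max]
    simp


/-- for `f : X → ℝ ∪ {+∞}` and `x₀ ∈ dom f`: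
(a) `f'_q(x₀; 0) = 0` or `f'_q(x₀; 0) = −∞`;
(b) `D_q(epi f)(x₀, f x₀)(x) = {μ : f'_q(x₀; x) ≤ μ}` for all `x`;
(c) `‖D_q(epi f)(x₀, f x₀)‖⁺_q = +∞` and `‖D_q(epi f)(x₀, f x₀)‖⊖_q = ‖f'_q(x₀;·)‖_q`. -/
theorem stmt6 (q : ℝ) (hq : 0 < q) (f : X → EReal) (hbot : ∀ x, f x ≠ ⊥)
    (x₀ : X) (r : ℝ) (hx₀ : f x₀ = (r : EReal)) :
    (subder q f x₀ 0 = 0 ∨ subder q f x₀ 0 = ⊥) ∧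
    (∀ x : X, gder q (epiMap f) x₀ r x = {μ : ℝ | subder q f x₀ x ≤ (μ : EReal)}) ∧
    plusNorm q (gder q (epiMap f) x₀ r) = ⊤ ∧
    minusNorm q (gder q (epiMap f) x₀ r) = subderNorm q f x₀ := by
  have hpart := gder_epi_iff (q := q) hx₀
  refine ⟨?_, fun x => Set.ext (hpart x), ?_, le_antisymm ?_ ?_⟩
  · refine (subder_zero_le hx₀).eq_or_lt.imp id fun hlt => ?_
    obtain ⟨m, hm, hm0⟩ := EReal.lt_iff_exists_real_btwn.1 hlt
    have hm0' : m < 0 := by exact_mod_cast hm0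
    refine EReal.eq_bot_iff_forall_lt _ |>.2 fun c => ?_
    -- The scaling factor `s ^ (1 / q)` multiplies `m` by `s`; this `s` brings `s * m` below `c`.
    have hs : 0 < (|c| + 1) / -m := div_pos (by positivity) (by linarith)
    have h := gder_scale (Real.rpow_pos_of_pos hs (1 / q)) ((hpart 0 m).2 hm.le)
    rw [← Real.rpow_mul hs.le, one_div_mul_cancel hq.ne', Real.rpow_one, smul_zero, hpart] at h
    refine h.trans_lt (EReal.coe_lt_coe_iff.2 ?_)
    have h2 : ((|c| + 1) / -m) • m = -(|c| + 1) := by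
      rw [smul_eq_mul, div_neg, neg_mul, div_mul_cancel₀ _ hm0'.ne]
    rw [h2]
    linarith [neg_abs_le c]
  · have h1 : (1 : ℝ) ∈ gder q (epiMap f) x₀ r 0 :=
      (hpart 0 1).2 ((subder_zero_le hx₀).trans (by norm_num))
    refine top_unique (le_iSup₂_of_le ((0 : X), (1 : ℝ)) ⟨h1, by simp⟩ ?_)
    simp [Real.zero_rpow hq.ne']
  · refine le_iInf₂ fun x hx => ?_
    by_cases htop : subder q f x₀ x = ⊤
    · simp [erealPos, htop]
    · obtain ⟨μ, hμ, he⟩ := exists_real_erealPos htop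
      refine iInf₂_le_of_le (x, μ) ⟨(hpart x μ).2 hμ, fun h0 => ?_⟩ ?_
      · have : x = 0 := congrArg Prod.fst h0
        simp [this] at hx
      · simp only [hx, Real.one_rpow, ENNReal.ofReal_one, div_one]
        exact he.le
  · refine le_iInf₂ ?_
    rintro ⟨x, μ⟩ ⟨hmem, hne⟩
    by_cases hx : x = 0
    · subst hx
      have hμ : μ ≠ 0 := fun h => hne (by simp [h])
      simp [Real.zero_rpow hq.ne', ENNReal.div_zero, hμ]
    · have hn : 0 < ‖x‖ := norm_pos_iff.2 hx
      have h := gder_scale (inv_pos.2 hn) hmem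
      refine iInf₂_le_of_le (‖x‖⁻¹ • x) (norm_smul_inv_norm (𝕜 := ℝ) hx) ?_
      refine (erealPos_le_of_le ((hpart _ _).1 h)).trans_eq ?_
      dsimp only
      rw [← ENNReal.ofReal_div_of_pos (Real.rpow_pos_of_pos hn q), norm_smul, Real.inv_rpow hn.le,
        Real.norm_of_nonneg (inv_nonneg.2 (Real.rpow_nonneg hn.le q)), inv_mul_eq_div]


end
end

section
/- Let X and Y be normed spaces, q > 0, F : X ⇉ Y, and (x̄, ȳ) ∈ gph F. Then srg_q F(x̄, ȳ) ≤ ‖D_q F(x̄, ȳ)‖⊖_q. If X and Y are finite-dimensional, then srg_q F(x̄, ȳ) = ‖D_q F(x̄, ȳ)‖⊖_q. -/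
/-!
The inequality comes from passing to the limit: along the sequences `u, v, t` defining a point
`(x, y)` of the graphical derivative, the subregularity estimate scales by `t ^ q` to
`τ ‖u‖ ^ q ≤ ‖v‖`, hence `τ ‖x‖ ^ q ≤ ‖y‖` (`StrSubregWith.mul_rpow_le`).

For the converse in finite dimensions, suppose `τ > 0` is not a modulus of strong subregularity.
Then there are points `(x, y)` of the graph, with `x → x₀`, such that `‖y - y₀‖ < τ ‖x - x₀‖ ^ q`.
Rescaling by `t = ‖x - x₀‖` gives pairs `((x - x₀) / t, (y - y₀) / t ^ q)` in the compact set
`sphere 0 1 ×ˢ closedBall 0 τ`, and a cluster point is an element of the graph of the derivative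
whose ratio is at most `τ` (`exists_gder_of_not_strSubregWith`). So every `τ` below the minimal
ratio is a modulus.
-/

noncomputable section

open Filter Topology Set Pointwise
open scoped ENNReal RealInnerProductSpace

variable {X : Type*} {Y : Type*} [NormedAddCommGroup X] [NormedSpace ℝ X]
  [NormedAddCommGroup Y] [NormedSpace ℝ Y]

/-- A modulus of strong subregularity bounds the graphical derivative from below. -/
theorem StrSubregWith.mul_rpow_le {q τ : ℝ} (hq : 0 < q) {F : X → Set Y} {x₀ : X} {y₀ : Y}
    (h : StrSubregWith q τ F x₀ y₀) {x : X} {y : Y}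
    (hy : y ∈ gder q F x₀ y₀ x) : τ * ‖x‖ ^ q ≤ ‖y‖ := by
  obtain ⟨U, hU, V, hV, h⟩ := h
  obtain ⟨u, v, t, hu, hv, ht, ht0, hF⟩ := hy
  have htq : Tendsto (fun k => t k ^ q) atTop (𝓝 0) := by
    have := ht0.rpow_const (p := q) (Or.inr hq.le)
    rwa [Real.zero_rpow hq.ne'] at this
  have hx : Tendsto (fun k => x₀ + t k • u k) atTop (𝓝 x₀) := by
    simpa using tendsto_const_nhds.add (ht0.smul hu)
  have hy : Tendsto (fun k => y₀ + (t k ^ q) • v k) atTop (𝓝 y₀) := by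
    simpa using tendsto_const_nhds.add (htq.smul hv)
  refine le_of_tendsto_of_tendsto ((hu.norm.rpow_const (Or.inr hq.le)).const_mul τ) hv.norm ?_
  filter_upwards [hx hU, hy hV] with k hkU hkV
  have h1 := (h _ hkU).trans (Metric.infEDist_le_edist_of_mem ⟨hF k, hkV⟩)
  have htk : 0 < t k ^ q := Real.rpow_pos_of_pos (ht k) q
  rw [edist_dist, ENNReal.ofReal_le_ofReal_iff dist_nonneg, dist_self_add_right, norm_smul,
    add_sub_cancel_left, norm_smul, Real.norm_of_nonneg (ht k).le, Real.norm_of_nonneg htk.le,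
    Real.mul_rpow (ht k).le (norm_nonneg _)] at h1
  exact le_of_mul_le_mul_left (by linarith) htk

/-- If `τ` is not a modulus of strong subregularity, the derivative takes a value of norm at most
`τ` at some unit vector. -/
theorem exists_gder_of_not_strSubregWith [FiniteDimensional ℝ X] [FiniteDimensional ℝ Y]
    {q τ : ℝ} (hq : 0 < q) {F : X → Set Y} {x₀ : X} {y₀ : Y}
    (h : ¬ StrSubregWith q τ F x₀ y₀) :
    ∃ (x : X) (y : Y), ‖x‖ = 1 ∧ ‖y‖ ≤ τ ∧ y ∈ gder q F x₀ y₀ x := by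
  have hn : ∀ n : ℕ, ∃ (x : X) (y : Y), ‖x - x₀‖ < 1 / ((n : ℝ) + 1) ∧ y ∈ F x ∧
      ‖y - y₀‖ < τ * ‖x - x₀‖ ^ q := by
    intro n
    by_contra! hcon
    refine h ⟨Metric.ball x₀ (1 / ((n : ℝ) + 1)), Metric.ball_mem_nhds _ (by positivity),
      univ, univ_mem, fun x hx => ?_⟩
    rw [inter_univ]
    refine Metric.le_infEDist.2 fun y hy => ?_
    rw [edist_comm, edist_dist, dist_eq_norm]
    exact ENNReal.ofReal_le_ofReal (hcon x y (by simpa [dist_eq_norm] using hx) hy)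
  choose a b ha hb hab using hn
  have hpos : ∀ n, 0 < ‖a n - x₀‖ := fun n => by
    refine (norm_nonneg _).lt_of_ne fun h0 => ?_
    have := hab n
    rw [← h0, Real.zero_rpow hq.ne', mul_zero] at this
    exact (norm_nonneg _).not_gt this
  set t : ℕ → ℝ := fun n => ‖a n - x₀‖ with ht
  have htq : ∀ n, 0 < t n ^ q := fun n => Real.rpow_pos_of_pos (hpos n) q
  have ht0 : Tendsto t atTop (𝓝 0) :=
    squeeze_zero (fun n => (hpos n).le) (fun n => (ha n).le) tendsto_one_div_add_atTop_nhds_zero_nat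
  have : ProperSpace X := FiniteDimensional.proper ℝ X
  have : ProperSpace Y := FiniteDimensional.proper ℝ Y
  have hK : IsCompact (Metric.sphere (0 : X) 1 ×ˢ Metric.closedBall (0 : Y) τ) :=
    (isCompact_sphere _ _).prod (isCompact_closedBall _ _)
  have hmem : ∀ n, ((t n)⁻¹ • (a n - x₀), (t n ^ q)⁻¹ • (b n - y₀)) ∈
      Metric.sphere (0 : X) 1 ×ˢ Metric.closedBall (0 : Y) τ := by
    intro n
    refine ⟨?_, ?_⟩
    · rw [mem_sphere_zero_iff_norm, norm_smul, norm_inv, Real.norm_of_nonneg (hpos n).le]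
      exact inv_mul_cancel₀ (hpos n).ne'
    · rw [mem_closedBall_zero_iff, norm_smul, norm_inv, Real.norm_of_nonneg (htq n).le,
        inv_mul_le_iff₀ (htq n), mul_comm]
      exact (hab n).le
  obtain ⟨⟨x, y⟩, ⟨hx, hy⟩, φ, hφ, hlim⟩ := hK.tendsto_subseq hmem
  refine ⟨x, y, by simpa using hx, by simpa using hy, _, _, t ∘ φ,
    (continuous_fst.tendsto _).comp hlim, (continuous_snd.tendsto _).comp hlim,
    fun k => hpos _, ht0.comp hφ.tendsto_atTop, fun k => ?_⟩
  simp only [Function.comp_apply]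
  rw [smul_inv_smul₀ (htq _).ne', smul_inv_smul₀ (hpos _).ne', add_sub_cancel, add_sub_cancel]
  exact hb _

/-- `srg_q F(x₀, y₀) ≤ ‖D_q F(x₀, y₀)‖⊖_q`, with equality in finite
dimensions. -/
theorem stmt10 (q : ℝ) (hq : 0 < q) (F : X → Set Y) (x₀ : X) (y₀ : Y)
    (hxy : y₀ ∈ F x₀) :
    srgMod q F x₀ y₀ ≤ minusNorm q (gder q F x₀ y₀) ∧
    (FiniteDimensional ℝ X → FiniteDimensional ℝ Y →
      srgMod q F x₀ y₀ = minusNorm q (gder q F x₀ y₀)) := by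
  have hle : srgMod q F x₀ y₀ ≤ minusNorm q (gder q F x₀ y₀) := by
    refine iSup₂_le fun τ hτ => le_iInf₂ fun p hp => ?_
    obtain ⟨hpF, hp0⟩ := hp
    have h := hτ.2.mul_rpow_le hq hpF
    rw [ENNReal.le_div_iff_mul_le ?_ (Or.inl ENNReal.ofReal_ne_top),
      ← ENNReal.ofReal_mul hτ.1.le]
    · exact ENNReal.ofReal_le_ofReal h
    -- the quotient is not `0 / 0`, since `p ≠ 0`
    · by_contra! hcon
      obtain ⟨h1, h2⟩ := hcon
      rw [ENNReal.ofReal_eq_zero] at h1 h2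
      refine hp0 (Prod.ext (by_contra fun hx => ?_) (norm_le_zero_iff.1 h2))
      exact h1.not_gt (Real.rpow_pos_of_pos (norm_pos_iff.2 hx) q)
  refine ⟨hle, fun _ _ => le_antisymm hle (le_of_forall_lt fun c hc => ?_)⟩
  -- interpolate `c < d < ‖D_q F‖⊖_q`, so that `d` is positive and finite
  obtain ⟨d, hcd, hd⟩ := exists_between hc
  have hdtop : d ≠ ⊤ := hd.ne_top
  have hdpos : 0 < d.toReal := ENNReal.toReal_pos (bot_le.trans_lt hcd).ne' hdtop
  have hsub : StrSubregWith q d.toReal F x₀ y₀ := by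
    by_contra hcon
    obtain ⟨x, y, hx, hy, hxy'⟩ := exists_gder_of_not_strSubregWith hq hcon
    have hne : (x, y) ≠ (0 : X × Y) := fun h0 => by simp [(Prod.mk.inj h0).1] at hx
    have hbound : minusNorm q (gder q F x₀ y₀) ≤
        ENNReal.ofReal ‖y‖ / ENNReal.ofReal (‖x‖ ^ q) := iInf₂_le (x, y) ⟨hxy', hne⟩
    rw [hx, Real.one_rpow, ENNReal.ofReal_one, div_one] at hbound
    exact hd.not_ge (hbound.trans (ENNReal.ofReal_le_of_le_toReal hy))
  refine hcd.trans_le ?_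
  rw [← ENNReal.ofReal_toReal hdtop]
  exact le_iSup₂ (f := fun (τ : ℝ) (_ : 0 < τ ∧ StrSubregWith q τ F x₀ y₀) => ENNReal.ofReal τ)
    d.toReal ⟨hdpos, hsub⟩

end
end

section
/- Let X and Y be normed spaces, q > 0, S : Y ⇉ X, and (ȳ, x̄) ∈ gph S. Then clm_q S(ȳ, x̄) ≤ (‖D_{1/q} S(ȳ, x̄)‖⁺_{1/q})^{-q}, with equality if X and Y are finite-dimensional. Moreover, consider the conditions: (i) S possesses the q-order isolated calmness property at (ȳ, x̄); (ii) ‖D_{1/q} S(ȳ, x̄)‖⁺_{1/q} < +∞; (iii) D_{1/q} S(ȳ, x̄)(0) = {0}. Then (i) ⇒ (ii) ⇒ (iii), and if X and Y are finite-dimensional, then (i), (ii) and (iii) are equivalent. -/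
/-!
Two facts link calmness moduli with the graph of the derivative `D = gder (1 / q) S y₀ x₀`.

* `CalmWith.le_of_mem_gder`: the calmness inequality `τ ‖x - x₀‖ ^ q ≤ ‖y - y₀‖` is homogeneous
  under the scaling `(y, x) ↦ (t y, t ^ (1 / q) x)`, so it passes to the limit and gives
  `τ ‖x‖ ^ q ≤ ‖y‖` on the graph of `D`; hence `τ ≤ ‖D‖⁺ ^ (-q)`.
* `exists_mem_gder_of_not_calmWith`: in finite dimensions, if calmness fails with moduli `τ k → τ`,
  points `(y k, x k) → (y₀, x₀)` violating it, rescaled by `t k = ‖x k - x₀‖ ^ q`, stay in a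
  bounded set with `x`-component on the unit sphere; a cluster point is a pair `(y, x)` in the
  graph of `D` with `‖x‖ = 1` and `‖y‖ ≤ τ`.

The second fact with `τ k = τ` constant yields `‖D‖⁺ ^ (-q) ≤ τ` whenever calmness with modulus `τ`
fails, hence equality; with `τ k → 0` it yields a nonzero element of `D 0` when calmness fails for
every modulus.
-/

noncomputable section

open Filter Topology Set Pointwise
open scoped ENNReal RealInnerProductSpace

variable {X : Type*} {Y : Type*} [NormedAddCommGroup X] [NormedSpace ℝ X]
  [NormedAddCommGroup Y] [NormedSpace ℝ Y]

theorem CalmWith.le_of_mem_gder {q τ : ℝ} (hq : 0 < q) {S : Y → Set X} {y₀ : Y} {x₀ : X}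
    (h : CalmWith q τ S y₀ x₀) {y : Y} {x : X} (hx : x ∈ gder (1 / q) S y₀ x₀ y) :
    τ * ‖x‖ ^ q ≤ ‖y‖ := by
  obtain ⟨U, hU, V, hV, h⟩ := h
  obtain ⟨u, v, t, hu, hv, ht, ht0, hS⟩ := hx
  have hq' : 0 < 1 / q := by positivity
  have hty : Tendsto (fun k => y₀ + t k • u k) atTop (𝓝 y₀) := by
    simpa using tendsto_const_nhds.add (ht0.smul hu)
  have htp : Tendsto (fun k => t k ^ (1 / q)) atTop (𝓝 0) := by
    have := ht0.rpow_const (p := 1 / q) (Or.inr hq'.le)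
    rwa [Real.zero_rpow hq'.ne'] at this
  have htx : Tendsto (fun k => x₀ + (t k ^ (1 / q)) • v k) atTop (𝓝 x₀) := by
    simpa using tendsto_const_nhds.add (htp.smul hv)
  refine le_of_tendsto_of_tendsto ((hv.norm.rpow_const (Or.inr hq.le)).const_mul τ) hu.norm ?_
  filter_upwards [hty hV, htx hU] with k hk1 hk2
  have h1 := h _ hk1 _ (hS k) hk2
  have h2 : 0 ≤ t k ^ (1 / q) := Real.rpow_nonneg (ht k).le _
  rw [add_sub_cancel_left, add_sub_cancel_left, norm_smul, norm_smul, Real.norm_of_nonneg h2,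
    Real.norm_of_nonneg (ht k).le, Real.mul_rpow h2 (norm_nonneg _), ← Real.rpow_mul (ht k).le,
    one_div_mul_cancel hq.ne', Real.rpow_one] at h1
  have h3 : t k * (τ * ‖v k‖ ^ q) ≤ t k * ‖u k‖ := by linarith
  exact le_of_mul_le_mul_left h3 (ht k)

theorem exists_mem_gder_of_not_calmWith [FiniteDimensional ℝ X] [FiniteDimensional ℝ Y]
    {q : ℝ} (hq : 0 < q) {S : Y → Set X} {y₀ : Y} {x₀ : X} {τ : ℕ → ℝ} {τ' : ℝ}
    (hτ : Tendsto τ atTop (𝓝 τ')) (h : ∀ k, ¬ CalmWith q (τ k) S y₀ x₀) :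
    ∃ y x, x ∈ gder (1 / q) S y₀ x₀ y ∧ ‖x‖ = 1 ∧ ‖y‖ ≤ τ' := by
  have hex : ∀ k : ℕ, ∃ y x, x ∈ S y ∧ ‖x - x₀‖ < 1 / ((k : ℝ) + 1) ∧
      ‖y - y₀‖ < τ k * ‖x - x₀‖ ^ q := by
    intro k
    by_contra hcon
    push Not at hcon
    have hk : (0 : ℝ) < 1 / ((k : ℝ) + 1) := by positivity
    refine h k ⟨_, Metric.ball_mem_nhds x₀ hk, univ, univ_mem, fun y _ x hx hxU => ?_⟩
    exact hcon y x hx (by simpa [dist_eq_norm] using hxU)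
  choose y x hS hx hy using hex
  have hpos : ∀ k, 0 < ‖x k - x₀‖ := by
    intro k
    refine lt_of_le_of_ne (norm_nonneg _) fun h0 => ?_
    have := hy k
    rw [← h0, Real.zero_rpow hq.ne', mul_zero] at this
    exact absurd this (not_lt.2 (norm_nonneg _))
  set t : ℕ → ℝ := fun k => ‖x k - x₀‖ ^ q with ht_def
  have ht : ∀ k, 0 < t k := fun k => Real.rpow_pos_of_pos (hpos k) q
  have htq : ∀ k, t k ^ (1 / q) = ‖x k - x₀‖ := fun k => by
    rw [ht_def]
    simp only
    rw [← Real.rpow_mul (norm_nonneg _), mul_one_div_cancel hq.ne', Real.rpow_one]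
  have ht0 : Tendsto t atTop (𝓝 0) := by
    have h1 : Tendsto (fun k => ‖x k - x₀‖) atTop (𝓝 0) :=
      squeeze_zero (fun k => norm_nonneg _) (fun k => (hx k).le)
        tendsto_one_div_add_atTop_nhds_zero_nat
    have := h1.rpow_const (p := q) (Or.inr hq.le)
    rwa [Real.zero_rpow hq.ne'] at this
  set u : ℕ → Y := fun k => (t k)⁻¹ • (y k - y₀) with hu_def
  set v : ℕ → X := fun k => ‖x k - x₀‖⁻¹ • (x k - x₀) with hv_def
  have hv1 : ∀ k, ‖v k‖ = 1 := fun k => by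
    rw [hv_def]
    simp only
    rw [norm_smul, norm_inv, norm_norm, inv_mul_cancel₀ (hpos k).ne']
  have hu1 : ∀ k, ‖u k‖ ≤ τ k := fun k => by
    rw [hu_def]
    simp only
    rw [norm_smul, norm_inv, Real.norm_of_nonneg (ht k).le, inv_mul_le_iff₀ (ht k), mul_comm]
    exact (hy k).le
  obtain ⟨M, hM⟩ := hτ.bddAbove_range
  have : ProperSpace X := FiniteDimensional.proper ℝ X
  have : ProperSpace Y := FiniteDimensional.proper ℝ Y
  obtain ⟨⟨yy, xx⟩, -, φ, hφ, hlim⟩ :=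
    ((isCompact_closedBall (0 : Y) M).prod (isCompact_closedBall (0 : X) 1)).tendsto_subseq
      (x := fun k => (u k, v k)) (fun k => ⟨by
        simpa using (hu1 k).trans (hM ⟨k, rfl⟩), by simpa using (hv1 k).le⟩)
  have hulim : Tendsto (u ∘ φ) atTop (𝓝 yy) := (continuous_fst.tendsto _).comp hlim
  have hvlim : Tendsto (v ∘ φ) atTop (𝓝 xx) := (continuous_snd.tendsto _).comp hlim
  refine ⟨yy, xx, ⟨u ∘ φ, v ∘ φ, t ∘ φ, hulim, hvlim, fun k => ht _,
    ht0.comp hφ.tendsto_atTop, fun k => ?_⟩, ?_, ?_⟩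
  · have e1 : x₀ + (t (φ k) ^ (1 / q)) • v (φ k) = x (φ k) := by
      rw [htq, hv_def]
      simp only
      rw [smul_inv_smul₀ (hpos _).ne', add_sub_cancel]
    have e2 : y₀ + t (φ k) • u (φ k) = y (φ k) := by
      rw [hu_def]
      simp only
      rw [smul_inv_smul₀ (ht _).ne', add_sub_cancel]
    simp only [Function.comp_apply]
    rw [e1, e2]
    exact hS _
  · refine tendsto_nhds_unique hvlim.norm ?_
    simp [hv1]
  · exact le_of_tendsto_of_tendsto' hulim.norm (hτ.comp hφ.tendsto_atTop) fun k => hu1 _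

/-- Calmness with modulus `τ` bounds `‖D‖⁺` by `τ ^ (-1 / q)`. -/
theorem CalmWith.plusNorm_le {q τ : ℝ} (hq : 0 < q) (hτ : 0 < τ) {S : Y → Set X} {y₀ : Y}
    {x₀ : X} (h : CalmWith q τ S y₀ x₀) :
    plusNorm (1 / q) (gder (1 / q) S y₀ x₀) ≤ ENNReal.ofReal (τ ^ (-(1 / q))) := by
  refine iSup₂_le ?_
  rintro ⟨y, x⟩ ⟨hx, hne⟩
  simp only at hx ⊢
  have hle := h.le_of_mem_gder hq hx
  have hy : 0 < ‖y‖ := by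
    rw [norm_pos_iff]
    rintro rfl
    apply hne
    rw [norm_zero] at hle
    have hx0 : ‖x‖ = 0 := by
      by_contra h0
      have : 0 < ‖x‖ ^ q := Real.rpow_pos_of_pos (lt_of_le_of_ne (norm_nonneg _) (Ne.symm h0)) q
      nlinarith
    rw [norm_eq_zero] at hx0
    rw [hx0]
    rfl
  have hyq : 0 < ‖y‖ ^ (1 / q) := Real.rpow_pos_of_pos hy _
  rw [← ENNReal.ofReal_div_of_pos hyq]
  apply ENNReal.ofReal_le_ofReal
  rw [div_le_iff₀ hyq]
  have h1 : ‖x‖ ^ q ≤ τ⁻¹ * ‖y‖ := by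
    rw [inv_mul_eq_div, le_div_iff₀ hτ]
    linarith
  have h2 := Real.rpow_le_rpow (by positivity) h1 (by positivity : 0 ≤ 1 / q)
  rwa [← Real.rpow_mul (norm_nonneg _), mul_one_div_cancel hq.ne', Real.rpow_one,
    Real.mul_rpow (by positivity) (norm_nonneg _), Real.inv_rpow hτ.le,
    ← Real.rpow_neg hτ.le] at h2

/-- The maps `τ ↦ τ ^ (-1 / q)` and `s ↦ s ^ (-q)` are mutually inverse on `(0, ∞)`. -/
theorem ofReal_rpow_neg_one_div_rpow_neg {q τ : ℝ} (hq : 0 < q) (hτ : 0 < τ) :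
    ENNReal.ofReal (τ ^ (-(1 / q))) ^ (-q) = ENNReal.ofReal τ := by
  rw [ENNReal.ofReal_rpow_of_pos (Real.rpow_pos_of_pos hτ _), ← Real.rpow_mul hτ.le, neg_mul_neg,
    one_div_mul_cancel hq.ne', Real.rpow_one]

theorem ennreal_rpow_neg_anti {q : ℝ} (hq : 0 < q) {a b : ℝ≥0∞} (h : a ≤ b) :
    b ^ (-q) ≤ a ^ (-q) := by
  rw [ENNReal.rpow_neg, ENNReal.rpow_neg, ENNReal.inv_le_inv]
  exact ENNReal.rpow_le_rpow h hq.le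

/-- In finite dimensions, a failing modulus `τ` bounds `‖D‖⁺ ^ (-q)` from above. -/
theorem plusNorm_rpow_le_of_not_calmWith [FiniteDimensional ℝ X] [FiniteDimensional ℝ Y]
    {q τ : ℝ} (hq : 0 < q) (hτ : 0 < τ) {S : Y → Set X} {y₀ : Y} {x₀ : X}
    (h : ¬ CalmWith q τ S y₀ x₀) :
    plusNorm (1 / q) (gder (1 / q) S y₀ x₀) ^ (-q) ≤ ENNReal.ofReal τ := by
  obtain ⟨y, x, hx, hx1, hy⟩ :=
    exists_mem_gder_of_not_calmWith hq (tendsto_const_nhds (x := τ)) fun _ : ℕ => h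
  rw [← ofReal_rpow_neg_one_div_rpow_neg hq hτ]
  refine ennreal_rpow_neg_anti hq ?_
  have hne : (y, x) ≠ 0 := by
    intro h0
    have : x = 0 := congrArg Prod.snd h0
    simp [this] at hx1
  refine le_trans ?_ (le_iSup₂_of_le (y, x) ⟨hx, hne⟩ le_rfl)
  simp only
  rw [hx1, ENNReal.ofReal_one, one_div (ENNReal.ofReal _), Real.rpow_neg hτ.le,
    ENNReal.ofReal_inv_of_pos (Real.rpow_pos_of_pos hτ _), ENNReal.inv_le_inv]
  exact ENNReal.ofReal_le_ofReal (Real.rpow_le_rpow (norm_nonneg _) hy (by positivity))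

/-- `clm_q S(y₀, x₀) ≤ (‖D_{1/q} S(y₀, x₀)‖⁺_{1/q})^{-q}`, with equality
in finite dimensions; moreover (i) `q`-order isolated calmness implies
(ii) `‖D_{1/q} S(y₀, x₀)‖⁺_{1/q} < +∞`, which implies (iii) `D_{1/q} S(y₀, x₀)(0) = {0}`,
and in finite dimensions (i), (ii), (iii) are equivalent. -/
theorem stmt12 (q : ℝ) (hq : 0 < q) (S : Y → Set X) (y₀ : Y) (x₀ : X)
    (hyx : x₀ ∈ S y₀) :
    clmMod q S y₀ x₀ ≤ (plusNorm (1 / q) (gder (1 / q) S y₀ x₀)) ^ (-q) ∧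
    (FiniteDimensional ℝ X → FiniteDimensional ℝ Y →
      clmMod q S y₀ x₀ = (plusNorm (1 / q) (gder (1 / q) S y₀ x₀)) ^ (-q)) ∧
    ((∃ τ > 0, CalmWith q τ S y₀ x₀) → plusNorm (1 / q) (gder (1 / q) S y₀ x₀) < ⊤) ∧
    (plusNorm (1 / q) (gder (1 / q) S y₀ x₀) < ⊤ → gder (1 / q) S y₀ x₀ 0 = {0}) ∧
    (FiniteDimensional ℝ X → FiniteDimensional ℝ Y →
      (((∃ τ > 0, CalmWith q τ S y₀ x₀) ↔
          plusNorm (1 / q) (gder (1 / q) S y₀ x₀) < ⊤) ∧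
       (plusNorm (1 / q) (gder (1 / q) S y₀ x₀) < ⊤ ↔
          gder (1 / q) S y₀ x₀ 0 = {0}))) := by
  have hle : clmMod q S y₀ x₀ ≤ (plusNorm (1 / q) (gder (1 / q) S y₀ x₀)) ^ (-q) := by
    refine iSup₂_le ?_
    rintro τ ⟨hτ, h⟩
    rw [← ofReal_rpow_neg_one_div_rpow_neg hq hτ]
    exact ennreal_rpow_neg_anti hq (h.plusNorm_le hq hτ)
  have h12 : (∃ τ > 0, CalmWith q τ S y₀ x₀) →
      plusNorm (1 / q) (gder (1 / q) S y₀ x₀) < ⊤ := by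
    rintro ⟨τ, hτ, h⟩
    exact (h.plusNorm_le hq hτ).trans_lt ENNReal.ofReal_lt_top
  have h23 : plusNorm (1 / q) (gder (1 / q) S y₀ x₀) < ⊤ → gder (1 / q) S y₀ x₀ 0 = {0} := by
    intro hfin
    refine Subset.antisymm (fun x hx => ?_) ?_
    · by_contra hx0
      rw [mem_singleton_iff] at hx0
      refine hfin.ne (top_le_iff.1 ?_)
      refine le_trans ?_ (le_iSup₂_of_le ((0 : Y), x) ⟨hx, fun h => hx0 (congrArg Prod.snd h)⟩
        le_rfl)
      simp only
      rw [norm_zero, Real.zero_rpow (by positivity), ENNReal.ofReal_zero, ENNReal.div_zero]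
      simpa using hx0
    · rintro _ rfl
      exact ⟨fun _ => 0, fun _ => 0, fun k => 1 / ((k : ℝ) + 1), tendsto_const_nhds,
        tendsto_const_nhds, fun k => by positivity, tendsto_one_div_add_atTop_nhds_zero_nat,
        fun k => by simpa using hyx⟩
  have h31 : FiniteDimensional ℝ X → FiniteDimensional ℝ Y →
      gder (1 / q) S y₀ x₀ 0 = {0} → ∃ τ > 0, CalmWith q τ S y₀ x₀ := by
    intro _ _ h0
    by_contra hcon
    push Not at hcon
    obtain ⟨y, x, hx, hx1, hy⟩ := exists_mem_gder_of_not_calmWith (S := S) (y₀ := y₀) (x₀ := x₀)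
      hq tendsto_one_div_add_atTop_nhds_zero_nat (fun k => hcon _ (by positivity))
    rw [norm_le_zero_iff] at hy
    rw [hy, h0, mem_singleton_iff] at hx
    simp [hx] at hx1
  refine ⟨hle, fun hX hY => le_antisymm hle ?_, h12, h23, fun hX hY =>
    ⟨⟨h12, fun h => h31 hX hY (h23 h)⟩, h23, fun h => h12 (h31 hX hY h)⟩⟩
  -- Every finite `τ` below `‖D‖⁺ ^ (-q)` is a calmness modulus.
  refine le_of_forall_lt fun c hc => ?_
  obtain ⟨r, hcr, hr⟩ := ENNReal.lt_iff_exists_nnreal_btwn.1 hc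
  have hr0 : 0 < (r : ℝ) := by
    have : (0 : ℝ≥0∞) < r := bot_le.trans_lt hcr
    exact_mod_cast this
  have hcalm : CalmWith q r S y₀ x₀ := by
    by_contra hcon
    have := plusNorm_rpow_le_of_not_calmWith hq hr0 hcon
    rw [ENNReal.ofReal_coe_nnreal] at this
    exact absurd hr (not_lt.2 this)
  refine hcr.trans_le ?_
  rw [← ENNReal.ofReal_coe_nnreal]
  exact le_iSup₂_of_le (f := fun (τ : ℝ) (_ : 0 < τ ∧ CalmWith q τ S y₀ x₀) => ENNReal.ofReal τ)
    (r : ℝ) ⟨hr0, hcalm⟩ le_rfl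

end
end

section
/- Let X and Y be finite-dimensional normed spaces, q > 0, F : X ⇉ Y, g : X → Y, (x̄, ȳ) ∈ gph F, and suppose g is q-order Hadamard directionally differentiable at x̄. Then srg_q(F+g)(x̄, ȳ + g(x̄)) ≥ srg_q F(x̄, ȳ) − ‖D_q g(x̄)‖⁺_q. In particular, if ‖D_q F(x̄, ȳ)‖⊖_q > ‖D_q g(x̄)‖⁺_q, then F+g is q-order strongly subregular at (x̄, ȳ + g(x̄)). -/
/-!
Write `L` for the `q`-norm of the directional derivative of `g`. Everything rests on one growth
estimate: by compactness of the unit sphere, for every real `c > L` the inequality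
`‖g x - g x₀‖ ≤ c ‖x - x₀‖ ^ q` holds for `x` near `x₀` (`HadamardDeriv.eventually_le`).
In particular `g` is continuous at `x₀`, so the triangle inequality turns a modulus `τ > c` of
strong subregularity of `F` into the modulus `τ - c` of `F + g` (`StrSubregWith.perturb`); the
inequality between the suprema follows on letting `c ↓ L`.

For the second claim, every real `τ < ‖D_q F‖⊖_q` is a modulus for `F`: a sequence in
the graph violating the inequality, rescaled by `t_k = ‖x_k - x₀‖`, has bounded terms and so, along
a subsequence, converges to a pair `(u, v)` in the graph of the graphical derivative with `‖u‖ = 1`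
and `‖v‖ ≤ τ` (`strSubregWith_of_lt_minusNorm`). Choosing `L < c < τ < ‖D_q F‖⊖_q` and perturbing
finishes the proof.
-/

noncomputable section

open Filter Topology Set Pointwise
open scoped ENNReal RealInnerProductSpace

variable {X : Type*} {Y : Type*} [NormedAddCommGroup X] [NormedSpace ℝ X]
  [NormedAddCommGroup Y] [NormedSpace ℝ Y]

/-- Strong subregularity says that the inequality `τ ‖x - x₀‖ ^ q ≤ ‖y - y₀‖` holds at all points
of the graph close to `(x₀, y₀)`. -/
theorem strSubregWith_iff_eventually {q τ : ℝ} {F : X → Set Y} {x₀ : X} {y₀ : Y} :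
    StrSubregWith q τ F x₀ y₀ ↔
      ∀ᶠ p : X × Y in 𝓝 x₀ ×ˢ 𝓝 y₀, p.2 ∈ F p.1 → τ * ‖p.1 - x₀‖ ^ q ≤ ‖p.2 - y₀‖ := by
  have key : ∀ (x : X) (V : Set Y),
      (ENNReal.ofReal (τ * ‖x - x₀‖ ^ q) ≤ EMetric.infEdist y₀ (F x ∩ V) ↔
        ∀ y ∈ F x ∩ V, τ * ‖x - x₀‖ ^ q ≤ ‖y - y₀‖) := by
    intro x V
    refine Metric.le_infEDist.trans (forall₂_congr fun y _ => ?_)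
    rw [edist_comm, edist_dist, dist_eq_norm, ENNReal.ofReal_le_ofReal_iff (norm_nonneg _)]
  constructor
  · rintro ⟨U, hU, V, hV, h⟩
    filter_upwards [prod_mem_prod hU hV] with p hp hpF
    exact (key p.1 V).1 (h p.1 hp.1) p.2 ⟨hpF, hp.2⟩
  · intro h
    obtain ⟨U, hU, V, hV, h⟩ := mem_prod_iff.1 h
    exact ⟨U, hU, V, hV, fun x hx => (key x V).2 fun y hy => h (mk_mem_prod hx hy.2) hy.1⟩

/-- Points converging to `x₀` without meeting it have, along a subsequence, a limiting unit
direction `u`. -/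
theorem exists_subseq_direction [FiniteDimensional ℝ X] {x₀ : X} {x : ℕ → X}
    (hx : Tendsto x atTop (𝓝 x₀)) (hne : ∀ k, x k ≠ x₀) :
    ∃ (φ : ℕ → ℕ) (u : X), StrictMono φ ∧ ‖u‖ = 1 ∧
      Tendsto (fun k => ‖x (φ k) - x₀‖⁻¹ • (x (φ k) - x₀)) atTop (𝓝 u) ∧
      Tendsto (fun k => ‖x (φ k) - x₀‖) atTop (𝓝[>] 0) := by
  have : ProperSpace X := FiniteDimensional.proper ℝ X
  have hpos : ∀ k, 0 < ‖x k - x₀‖ := fun k => norm_pos_iff.2 (sub_ne_zero.2 (hne k))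
  have hmem : ∀ k, ‖x k - x₀‖⁻¹ • (x k - x₀) ∈ Metric.sphere (0 : X) 1 := by
    intro k
    rw [mem_sphere_zero_iff_norm, norm_smul, norm_inv, norm_norm, inv_mul_cancel₀ (hpos k).ne']
  obtain ⟨u, hu, φ, hφ, hlim⟩ := (isCompact_sphere (0 : X) 1).tendsto_subseq hmem
  refine ⟨φ, u, hφ, mem_sphere_zero_iff_norm.1 hu, hlim, ?_⟩
  refine tendsto_nhdsWithin_iff.2 ⟨?_, Eventually.of_forall fun k => hpos _⟩
  exact (tendsto_iff_norm_sub_tendsto_zero.1 hx).comp hφ.tendsto_atTop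

/-- A Hadamard differentiable function grows at rate at most `c ‖x - x₀‖ ^ q` near `x₀`, for any `c`
above the norm of its derivative. -/
theorem HadamardDeriv.eventually_le [FiniteDimensional ℝ X] {q : ℝ} (hq : 0 < q) {g : X → Y}
    {x₀ : X} {Dg : X → Y} (hg : HadamardDeriv q g x₀ Dg) {c : ℝ}
    (hc : (⨆ (x : X) (_ : x ≠ 0), ENNReal.ofReal ‖Dg x‖ / ENNReal.ofReal (‖x‖ ^ q)) <
      ENNReal.ofReal c) :
    ∀ᶠ x in 𝓝 x₀, ‖g x - g x₀‖ ≤ c * ‖x - x₀‖ ^ q := by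
  by_contra hcon
  obtain ⟨x, hx, hbad⟩ := exists_seq_forall_of_frequently (not_eventually.1 hcon)
  have hne : ∀ k, x k ≠ x₀ := by
    intro k h
    apply hbad k
    simp [h, Real.zero_rpow hq.ne']
  obtain ⟨φ, u, -, hu1, hu, ht⟩ := exists_subseq_direction hx hne
  have hlim := ((hg u).comp (hu.prodMk ht)).norm
  have hle : c ≤ ‖Dg u‖ := by
    refine ge_of_tendsto' hlim fun k => ?_
    have hpos : 0 < ‖x (φ k) - x₀‖ := norm_pos_iff.2 (sub_ne_zero.2 (hne _))
    have hpq : 0 < ‖x (φ k) - x₀‖ ^ q := Real.rpow_pos_of_pos hpos q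
    simp only [Function.comp_apply]
    rw [smul_inv_smul₀ hpos.ne', add_sub_cancel, norm_smul, norm_inv, Real.norm_of_nonneg hpq.le,
      ← div_eq_inv_mul, le_div_iff₀ hpq]
    exact (not_le.1 (hbad (φ k))).le
  have hu0 : u ≠ 0 := by
    rintro rfl
    simp at hu1
  have hsup : ENNReal.ofReal ‖Dg u‖ ≤
      ⨆ (x : X) (_ : x ≠ 0), ENNReal.ofReal ‖Dg x‖ / ENNReal.ofReal (‖x‖ ^ q) := by
    refine le_trans (le_of_eq ?_) (le_iSup₂ u hu0)
    simp [hu1]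
  exact absurd (hc.trans_le (ENNReal.ofReal_le_ofReal hle)) (not_lt.2 hsup)

theorem StrSubregWith.perturb {q τ c : ℝ} (hq : 0 < q) {F : X → Set Y} {g : X → Y} {x₀ : X}
    {y₀ : Y} (hF : StrSubregWith q τ F x₀ y₀)
    (hg : ∀ᶠ x in 𝓝 x₀, ‖g x - g x₀‖ ≤ c * ‖x - x₀‖ ^ q) :
    StrSubregWith q (τ - c) (fun u => (fun y => y + g u) '' F u) x₀ (y₀ + g x₀) := by
  rw [strSubregWith_iff_eventually] at hF ⊢
  have hgc : Tendsto g (𝓝 x₀) (𝓝 (g x₀)) := by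
    rw [tendsto_iff_norm_sub_tendsto_zero]
    refine squeeze_zero' (Eventually.of_forall fun _ => norm_nonneg _) hg ?_
    have h : Tendsto (fun x : X => c * ‖x - x₀‖ ^ q) (𝓝 x₀) (𝓝 (c * ‖x₀ - x₀‖ ^ q)) :=
      (((continuous_id.sub continuous_const).norm.rpow_const
        fun _ => Or.inr hq.le).const_mul c).tendsto x₀
    simpa [Real.zero_rpow hq.ne'] using h
  -- `(x, z) ↦ (x, z - g x)` carries graph points of `F + g` near `(x₀, y₀ + g x₀)` to graph points
  -- of `F` near `(x₀, y₀)`.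
  have hshift : Tendsto (fun p : X × Y => (p.1, p.2 - g p.1)) (𝓝 x₀ ×ˢ 𝓝 (y₀ + g x₀))
      (𝓝 x₀ ×ˢ 𝓝 y₀) := by
    have h := tendsto_snd (f := 𝓝 x₀) (g := 𝓝 (y₀ + g x₀)) |>.sub (hgc.comp tendsto_fst)
    rw [add_sub_cancel_right] at h
    exact tendsto_fst.prodMk h
  filter_upwards [hshift.eventually hF, tendsto_fst.eventually hg] with p hp hgp
  rintro ⟨y, hy, hyp⟩
  obtain rfl : y = p.2 - g p.1 := eq_sub_of_add_eq hyp
  have h1 := hp hy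
  have h2 : ‖p.2 - g p.1 - y₀‖ ≤ ‖p.2 - (y₀ + g x₀)‖ + ‖g p.1 - g x₀‖ := by
    refine le_trans (le_of_eq ?_) (norm_sub_le _ _)
    congr 1
    abel
  linarith

/-- Every real below the inner norm of the graphical derivative is a modulus of strong
subregularity. -/
theorem strSubregWith_of_lt_minusNorm [FiniteDimensional ℝ X] [FiniteDimensional ℝ Y] {q τ : ℝ}
    (hq : 0 < q) {F : X → Set Y} {x₀ : X} {y₀ : Y}
    (hτ : ENNReal.ofReal τ < minusNorm q (gder q F x₀ y₀)) : StrSubregWith q τ F x₀ y₀ := by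
  have : ProperSpace Y := FiniteDimensional.proper ℝ Y
  rw [strSubregWith_iff_eventually]
  by_contra hcon
  obtain ⟨p, hp, hbad⟩ := exists_seq_forall_of_frequently (not_eventually.1 hcon)
  simp only [Classical.not_imp, not_le] at hbad
  have hne : ∀ k, (p k).1 ≠ x₀ := by
    intro k h
    have h2 := (hbad k).2
    rw [h, sub_self, norm_zero, Real.zero_rpow hq.ne', mul_zero] at h2
    exact absurd h2 (not_lt.2 (norm_nonneg _))
  obtain ⟨φ, u, hφ, hu1, hu, ht⟩ := exists_subseq_direction (tendsto_fst.comp hp) hne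
  simp only [Function.comp_apply] at hu ht
  have hpos : ∀ k, 0 < ‖(p k).1 - x₀‖ := fun k => norm_pos_iff.2 (sub_ne_zero.2 (hne k))
  have hpq : ∀ k, 0 < ‖(p k).1 - x₀‖ ^ q := fun k => Real.rpow_pos_of_pos (hpos k) q
  have hmem : ∀ k, (‖(p (φ k)).1 - x₀‖ ^ q)⁻¹ • ((p (φ k)).2 - y₀) ∈
      Metric.closedBall (0 : Y) τ := by
    intro k
    rw [mem_closedBall_zero_iff, norm_smul, norm_inv, Real.norm_of_nonneg (hpq _).le,
      ← div_eq_inv_mul, div_le_iff₀ (hpq _)]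
    exact (hbad _).2.le
  obtain ⟨v, hv, ψ, hψ, hlim⟩ := (isCompact_closedBall (0 : Y) τ).tendsto_subseq hmem
  have hder : v ∈ gder q F x₀ y₀ u := by
    refine ⟨_, _, _, hu.comp hψ.tendsto_atTop, hlim, fun k => hpos (φ (ψ k)),
      (tendsto_nhdsWithin_iff.1 ht).1.comp hψ.tendsto_atTop, fun k => ?_⟩
    simp only [Function.comp_apply]
    rw [smul_inv_smul₀ (hpos _).ne', smul_inv_smul₀ (hpq _).ne', add_sub_cancel, add_sub_cancel]
    exact (hbad _).1
  have hne0 : ((u, v) : X × Y) ≠ 0 := by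
    intro h
    have hu0 : u = 0 := congrArg Prod.fst h
    simp [hu0] at hu1
  have hinf : minusNorm q (gder q F x₀ y₀) ≤ ENNReal.ofReal ‖v‖ := by
    refine le_trans (iInf₂_le (u, v) ⟨hder, hne0⟩) (le_of_eq ?_)
    simp [hu1]
  have hvτ := ENNReal.ofReal_le_ofReal (mem_closedBall_zero_iff.1 hv)
  exact absurd (hτ.trans_le (hinf.trans hvτ)) (lt_irrefl _)

/-- stability of `q`-order strong subregularity under perturbation by a
`q`-order Hadamard directionally differentiable function `g`:
`srg_q(F+g)(x₀, y₀ + g x₀) ≥ srg_q F(x₀, y₀) − ‖D_q g(x₀)‖⁺_q`; in particular, if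
`‖D_q F(x₀, y₀)‖⊖_q > ‖D_q g(x₀)‖⁺_q`, then `F+g` is `q`-order strongly subregular at
`(x₀, y₀ + g x₀)`. -/
theorem stmt13 (q : ℝ) (hq : 0 < q)
    (hX : FiniteDimensional ℝ X) (hY : FiniteDimensional ℝ Y)
    (F : X → Set Y) (g : X → Y) (x₀ : X) (y₀ : Y) (hxy : y₀ ∈ F x₀)
    (Dg : X → Y) (hg : HadamardDeriv q g x₀ Dg) :
    srgMod q F x₀ y₀ -
        (⨆ (x : X) (_ : x ≠ 0), ENNReal.ofReal ‖Dg x‖ / ENNReal.ofReal (‖x‖ ^ q)) ≤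
      srgMod q (fun u => (fun y => y + g u) '' F u) x₀ (y₀ + g x₀) ∧
    ((⨆ (x : X) (_ : x ≠ 0), ENNReal.ofReal ‖Dg x‖ / ENNReal.ofReal (‖x‖ ^ q)) <
        minusNorm q (gder q F x₀ y₀) →
      ∃ τ > 0, StrSubregWith q τ (fun u => (fun y => y + g u) '' F u) x₀ (y₀ + g x₀)) := by
  set L := ⨆ (x : X) (_ : x ≠ 0), ENNReal.ofReal ‖Dg x‖ / ENNReal.ofReal (‖x‖ ^ q) with hL
  constructor
  · rw [tsub_le_iff_right]
    refine iSup₂_le fun τ hτ => ENNReal.le_of_forall_pos_le_add fun ε hε hfin => ?_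
    have hLtop : L ≠ ⊤ := fun h => by simp [h] at hfin
    have hε' : (0 : ℝ) < ε := hε
    have hcL : ENNReal.ofReal (L.toReal + ε) = L + ε := by
      rw [ENNReal.ofReal_add ENNReal.toReal_nonneg hε'.le, ENNReal.ofReal_toReal hLtop,
        ENNReal.ofReal_coe_nnreal]
    have hlt : L < ENNReal.ofReal (L.toReal + ε) := by
      rw [hcL]
      exact ENNReal.lt_add_right hLtop (by exact_mod_cast hε.ne')
    rw [add_assoc, ← hcL]
    rcases le_or_gt τ (L.toReal + ε) with h | h
    · exact (ENNReal.ofReal_le_ofReal h).trans le_add_self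
    · have hmod := hτ.2.perturb hq (hg.eventually_le hq hlt)
      have hle : ENNReal.ofReal (τ - (L.toReal + ε)) ≤
          srgMod q (fun u => (fun y => y + g u) '' F u) x₀ (y₀ + g x₀) :=
        le_iSup₂ (f := fun (τ : ℝ) (_ : 0 < τ ∧ StrSubregWith q τ
          (fun u => (fun y => y + g u) '' F u) x₀ (y₀ + g x₀)) => ENNReal.ofReal τ)
          (τ - (L.toReal + ε)) ⟨sub_pos.2 h, hmod⟩
      calc ENNReal.ofReal τ
          = ENNReal.ofReal (τ - (L.toReal + ε)) + ENNReal.ofReal (L.toReal + ε) := by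
            rw [← ENNReal.ofReal_add (sub_pos.2 h).le (by positivity), sub_add_cancel]
        _ ≤ _ := by gcongr
  · intro h
    obtain ⟨τ, -, hLτ, hτ⟩ := ENNReal.lt_iff_exists_real_btwn.1 h
    obtain ⟨c, hc0, hLc, hcτ⟩ := ENNReal.lt_iff_exists_real_btwn.1 hLτ
    have hlt : c < τ := (ENNReal.ofReal_lt_ofReal_iff_of_nonneg hc0).1 hcτ
    exact ⟨τ - c, sub_pos.2 hlt,
      (strSubregWith_of_lt_minusNorm hq hτ).perturb hq (hg.eventually_le hq hLc)⟩

end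
end

section
/- Let X be a normed space, q > 0, f : X → ℝ ∪ {+∞}, and x̄ ∈ dom f. Then shrp_q f(x̄) ≤ ‖f'_q(x̄;·)‖_q. If X is finite-dimensional, then shrp_q f(x̄) = ‖f'_q(x̄;·)‖_q. -/
/-!
If `x₀` is sharp with modulus `τ`, the difference quotient at `x₀ + t u` is at least `τ ‖u‖ ^ q`,
and letting `u → x` with `‖x‖ = 1` gives `τ ≤ f'_q(x₀; x)` (`SharpMinWith.le_subder`).
Conversely, if `c < f'_q(x₀; x)` for every unit `x`, the difference quotients exceed `c` near each
`(x, 0)`. When the unit sphere is compact this is uniform in the direction, so writing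
`x = x₀ + t u` with `t = ‖x - x₀‖` shows that `x₀` is sharp with modulus `c`
(`sharpMinWith_of_lt_subder`).
-/

noncomputable section

open Filter Topology Set Pointwise
open scoped ENNReal RealInnerProductSpace

variable {X : Type*} {Y : Type*} [NormedAddCommGroup X] [NormedSpace ℝ X]
  [NormedAddCommGroup Y] [NormedSpace ℝ Y]

theorem ofReal_le_erealPos {a : ℝ} {y : EReal} (h : (a : EReal) ≤ y) :
    ENNReal.ofReal a ≤ erealPos y := by
  unfold erealPos
  split_ifs with hy
  · exact le_top
  · refine ENNReal.ofReal_le_ofReal ?_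
    have := EReal.toReal_le_toReal h (EReal.coe_ne_bot a) hy
    simpa using this

theorem lt_of_ofReal_lt_erealPos {a : ℝ} {y : EReal} (h : ENNReal.ofReal a < erealPos y) :
    (a : EReal) < y := by
  induction y with
  | bot => simp [erealPos] at h
  | top => exact EReal.coe_lt_top a
  | coe r =>
    rw [erealPos, if_neg (EReal.coe_ne_top r), EReal.toReal_coe] at h
    exact_mod_cast (ENNReal.ofReal_lt_ofReal_iff'.1 h).1

/-- Along `x₀ + t u` the difference quotient of a sharp function is at least `τ ‖u‖ ^ q`,
and this bound tends to `τ` as `u` approaches a unit vector. -/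
theorem SharpMinWith.le_subder {q τ : ℝ} {f : X → EReal} {x₀ x : X}
    (h : SharpMinWith q τ f x₀) (hx : ‖x‖ = 1) : (τ : EReal) ≤ subder q f x₀ x := by
  obtain ⟨U, hU, hfU⟩ := h
  have hlim : Tendsto (fun p : X × ℝ => ((τ * ‖p.1‖ ^ q : ℝ) : EReal))
      ((𝓝 x) ×ˢ (𝓝[>] (0 : ℝ))) (𝓝 (τ : EReal)) := by
    refine (continuous_coe_real_ereal.tendsto τ).comp ?_
    have h1 : Tendsto (fun p : X × ℝ => ‖p.1‖) ((𝓝 x) ×ˢ (𝓝[>] (0 : ℝ))) (𝓝 1) := by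
      rw [← hx]
      exact tendsto_fst.norm
    simpa using (h1.rpow_const (p := q) (Or.inl one_ne_zero)).const_mul τ
  have hpt : Tendsto (fun p : X × ℝ => x₀ + p.2 • p.1) ((𝓝 x) ×ˢ (𝓝[>] (0 : ℝ))) (𝓝 x₀) := by
    have h2 : Tendsto (fun p : X × ℝ => p.2) ((𝓝 x) ×ˢ (𝓝[>] (0 : ℝ))) (𝓝 0) :=
      tendsto_snd.mono_right nhdsWithin_le_nhds
    simpa using (h2.smul (tendsto_fst (f := 𝓝 x))).const_add x₀
  have hpos : ∀ᶠ p : X × ℝ in (𝓝 x) ×ˢ (𝓝[>] (0 : ℝ)), 0 < p.2 :=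
    tendsto_snd.eventually self_mem_nhdsWithin
  rw [← hlim.liminf_eq]
  refine liminf_le_liminf ?_
  filter_upwards [hpt.eventually hU, hpos] with p hp ht
  have htq : 0 < p.2 ^ q := Real.rpow_pos_of_pos ht q
  rw [EReal.le_div_iff_mul_le (by exact_mod_cast htq) (EReal.coe_ne_top _)]
  have := hfU _ hp
  rw [add_sub_cancel_left, norm_smul, Real.norm_of_nonneg ht.le,
    Real.mul_rpow ht.le (norm_nonneg _)] at this
  rw [← EReal.coe_mul]
  convert this using 2
  ring

/-- Compactness of the unit sphere makes the lower bound on the difference quotients uniform in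
the direction, so that it holds on a whole ball around `x₀`. -/
theorem sharpMinWith_of_lt_subder [FiniteDimensional ℝ X] {q c : ℝ} (hq : 0 < q)
    {f : X → EReal} (hbot : ∀ x, f x ≠ ⊥) {x₀ : X} (hx₀ : f x₀ ≠ ⊤)
    (h : ∀ x : X, ‖x‖ = 1 → (c : EReal) < subder q f x₀ x) : SharpMinWith q c f x₀ := by
  have hK : IsCompact (Metric.sphere (0 : X) 1) :=
    haveI := FiniteDimensional.proper_real X
    isCompact_sphere 0 1
  have hev : ∀ᶠ p : X × ℝ in 𝓝ˢ (Metric.sphere (0 : X) 1) ×ˢ (𝓝[>] (0 : ℝ)),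
      (c : EReal) < (f (x₀ + p.2 • p.1) - f x₀) / ((p.2 ^ q : ℝ) : EReal) := by
    refine hK.mem_nhdsSet_prod_of_forall fun x hx => ?_
    exact eventually_lt_of_lt_liminf (h x (by simpa using hx))
  obtain ⟨P, hP, Q, hQ, hPQ⟩ := eventually_prod_iff.1 hev
  obtain ⟨δ, hδ, hball⟩ := mem_nhdsGT_iff_exists_Ioo_subset.1 hQ
  refine ⟨Metric.ball x₀ δ, Metric.ball_mem_nhds _ hδ, fun x hx => ?_⟩
  rcases eq_or_ne x x₀ with rfl | hne
  · simp [Real.zero_rpow hq.ne', EReal.sub_self hx₀ (hbot x)]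
  have ht : 0 < ‖x - x₀‖ := norm_pos_iff.2 (sub_ne_zero.2 hne)
  have htq : 0 < ‖x - x₀‖ ^ q := Real.rpow_pos_of_pos ht q
  have hu : P (‖x - x₀‖⁻¹ • (x - x₀)) := by
    refine subset_of_mem_nhdsSet hP ?_
    simp [norm_smul, ht.ne']
  have key := hPQ hu (hball ⟨ht, by rwa [mem_ball_iff_norm] at hx⟩)
  simp only [smul_inv_smul₀ ht.ne', add_sub_cancel] at key
  rw [EReal.coe_mul]
  exact (EReal.le_div_iff_mul_le (by exact_mod_cast htq) (EReal.coe_ne_top _)).1 key.le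

/-- `shrp_q f(x₀) ≤ ‖f'_q(x₀;·)‖_q`, with equality in finite dimensions. -/
theorem stmt15 (q : ℝ) (hq : 0 < q) (f : X → EReal) (hbot : ∀ x, f x ≠ ⊥)
    (x₀ : X) (hx₀ : f x₀ ≠ ⊤) :
    shrpMod q f x₀ ≤ subderNorm q f x₀ ∧
    (FiniteDimensional ℝ X → shrpMod q f x₀ = subderNorm q f x₀) := by
  have hle : shrpMod q f x₀ ≤ subderNorm q f x₀ :=
    iSup₂_le fun τ hτ => le_iInf₂ fun x hx => ofReal_le_erealPos (hτ.2.le_subder hx)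
  refine ⟨hle, fun _ => le_antisymm hle ?_⟩
  refine le_of_forall_lt fun b hb => ?_
  obtain ⟨c, hbc, hc⟩ := exists_between hb
  have hctop : c ≠ ⊤ := hc.ne_top
  have hcpos : 0 < c.toReal := ENNReal.toReal_pos (bot_le.trans_lt hbc).ne' hctop
  refine hbc.trans_le ?_
  rw [← ENNReal.ofReal_toReal hctop]
  refine le_iSup₂_of_le c.toReal ⟨hcpos, sharpMinWith_of_lt_subder hq hbot hx₀ fun x hx => ?_⟩ le_rfl
  refine lt_of_ofReal_lt_erealPos ?_
  rw [ENNReal.ofReal_toReal hctop]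
  exact hc.trans_le (iInf₂_le x hx)

end
end
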